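/- Let n ≥ 2 and let 𝒜 = {[A₁],…,[A_r]} be a malnormal subgroup system of F_n, with L, Γ_i, 𝒞 and F_n − 𝒜 as in the context. Let η : F_n − 𝒜 → ℝ≥0 be a function such that η(w) = η(w⁻¹) for every w ∈ F_n − 𝒜, and such that for every w ∈ F_n − 𝒜 one has η(w) = Σ_{v a length-one extension of w} η(v). Then there exists a unique relative current η̃ on (F_n,𝒜) such that η̃(C(γ_w)) = η(w) for every w ∈ F_n − 𝒜. -/

import Mathlib

/-!
A current is determined by the masses of the boxes `P·C(γ_{P⁻¹Q})`, the sets of geodesics through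
two vertices `P` and `Q`. The box of `P` and `Q` is compact and avoids `∂²𝒜` as soon as
`P⁻¹Q ∈ F_n − 𝒜`. Conversely, a long geodesic whose label is not in `F_n − 𝒜` stays in the tree
of one peripheral subgroup, because consecutive trees overlap in more than `L` edges. So a point
outside `∂²𝒜` has small neighbourhoods that are boxes labelled in `F_n − 𝒜`. Those with `|P| = |Q|`
form a π-system generating the Borel sets, which gives uniqueness.

For existence, let `μ_M` be the sum of point masses `η(p⁻¹q)`, one in the box of each pair
`{p, q}` of vertices of the sphere of radius `M`. Summing the Kirchhoff law over the geodesics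
that prolong `[P, Q]` up to the sphere shows that `μ_M` gives the box of `P` and `Q` the mass
`η(P⁻¹Q)`, once `M ≥ |P|, |Q|`. A limit of the `μ_M` is an additive function on compact open
sets, hence extends to a measure, and it is invariant because its masses on boxes depend only on
`P⁻¹Q`.
-/

open scoped Classical
open MeasureTheory

noncomputable section

namespace RelCurr

/-- The alphabet `𝔄 = ℬ ∪ ℬ⁻¹`: a letter is a generator together with a sign. -/
abbrev Letter (n : ℕ) := Fin n × Bool

/-- The inverse of a letter. -/
def linv {n : ℕ} (x : Letter n) : Letter n := (x.1, !x.2)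

/-- The free group of rank `n` on the basis `Fin n`. -/
abbrev F (n : ℕ) := FreeGroup (Fin n)

/-- The reduced word of an element of `F n`. -/
def rword {n : ℕ} (g : F n) : List (Letter n) := FreeGroup.toWord g

/-- The length `|g|` of the reduced word of `g`. -/
def wlen {n : ℕ} (g : F n) : ℕ := (rword g).length

/-- The single-letter element of `F n` given by a letter. -/
def letterE {n : ℕ} (b : Letter n) : F n := FreeGroup.mk [b]

/-- The conjugate subgroup `g A g⁻¹`. -/
def conjSub {n : ℕ} (g : F n) (A : Subgroup (F n)) : Subgroup (F n) :=
  Subgroup.map (MulAut.conj g).toMonoidHom A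

/-- A subgroup `A` is malnormal if `xAx⁻¹ ∩ A = {1}` for every `x ∉ A`. -/
def Malnormal {n : ℕ} (A : Subgroup (F n)) : Prop :=
  ∀ x : F n, x ∉ A → conjSub x A ⊓ A = ⊥

/-- The word metric on the Cayley tree `T`. -/
def dist' {n : ℕ} (x y : F n) : ℕ := wlen (x⁻¹ * y)

/-- The cyclically reduced length of `a`. -/
def cycLen {n : ℕ} (a : F n) : ℕ := sInf { m | ∃ h : F n, wlen (h⁻¹ * a * h) = m }

/-- The vertex set of the minimal `A`-invariant subtree `T_A` of the Cayley tree: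
the union of the axes of the nontrivial elements of `A`. -/
def treeVerts {n : ℕ} (A : Subgroup (F n)) : Set (F n) :=
  { h | ∃ a ∈ A, a ≠ 1 ∧ wlen (h⁻¹ * a * h) = cycLen a }

/-- `γ_w ⊆ S`: every prefix of the reduced word of `w` lies in the vertex set `S`. -/
def pathIn {n : ℕ} (w : F n) (S : Set (F n)) : Prop :=
  ∀ m ≤ wlen w, FreeGroup.mk ((rword w).take m) ∈ S

/-- An element is cyclically reduced if the last letter of its reduced word is not the
inverse of the first letter. -/
def CyclicallyReduced {n : ℕ} (w : F n) : Prop :=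
  ∀ x y : Letter n, (rword w).head? = some x → (rword w).getLast? = some y → y ≠ linv x

/-- `v` is a length-one extension of `w`. -/
def LengthOneExt {n : ℕ} (w v : F n) : Prop :=
  ∃ b : Letter n, v = w * letterE b ∧ wlen v = wlen w + 1

/-- `a` is an extension of `w`: the reduced word of `w` is a proper prefix of that of `a`. -/
def ExtensionOf {n : ℕ} (w a : F n) : Prop :=
  rword w <+: rword a ∧ wlen w < wlen a

/-- `g` is a proper power. -/
def IsProperPower {n : ℕ} (g : F n) : Prop := ∃ (h : F n) (k : ℕ), 2 ≤ k ∧ g = h ^ k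

section System

variable {n r : ℕ} (A : Fin r → Subgroup (F n))

/-- `[B] ∈ 𝒜`, i.e. `B` is a conjugate of one of the subgroups of the system. -/
def InSystem (B : Subgroup (F n)) : Prop := ∃ (i : Fin r) (g : F n), B = conjSub g (A i)

/-- The family `A` represents a subgroup system: finite rank subgroups distinct
from `{1}` and `F n`. -/
def IsSystem : Prop := (∀ i, (A i).FG) ∧ (∀ i, A i ≠ ⊥) ∧ (∀ i, A i ≠ ⊤)

/-- The subgroup system is malnormal. -/
def SystemMalnormal : Prop :=
  (∀ i, Malnormal (A i)) ∧
  ∀ B₁ B₂ : Subgroup (F n), InSystem A B₁ → InSystem A B₂ → B₁ ≠ B₂ → B₁ ⊓ B₂ = ⊥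

/-- `g` is `𝒜`-peripheral: trivial or contained in a conjugate of one of the `A i`. -/
def Peripheral (g : F n) : Prop := g = 1 ∨ ∃ B, InSystem A B ∧ g ∈ B

/-- The diameter of the intersection of the trees of two distinct subgroups of the
system is at most `L`. -/
def DiamBound (L : ℕ) : Prop :=
  ∀ B₁ B₂ : Subgroup (F n), InSystem A B₁ → InSystem A B₂ → B₁ ≠ B₂ →
    ∀ x ∈ treeVerts B₁ ∩ treeVerts B₂, ∀ y ∈ treeVerts B₁ ∩ treeVerts B₂, dist' x y ≤ L

/-- `B ∈ Γ_i`: `B` is a conjugate of `A i` whose tree contains the base point `1`. -/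
def GammaMem (i : Fin r) (B : Subgroup (F n)) : Prop :=
  (∃ g : F n, B = conjSub g (A i)) ∧ (1 : F n) ∈ treeVerts B

/-- The finite set `𝒞` of words of length `L+2` whose path is contained in no tree
`T_B` with `B ∈ Γ_i`, for every `i`. -/
def Ccal (L : ℕ) : Set (F n) :=
  { w | wlen w = L + 2 ∧ ∀ (i : Fin r) (B : Subgroup (F n)), GammaMem A i B →
      ¬ pathIn w (treeVerts B) }

/-- `F_n − 𝒜`: the words containing an element of `𝒞` as a contiguous subword. -/
def FmA (L : ℕ) : Set (F n) := { w | ∃ x ∈ Ccal A L, rword x <:+: rword w }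

/-- `S_k`: words of length `k` not containing any element of `𝒞` as a subword. -/
def Sk (L k : ℕ) : Set (F n) := { w | wlen w = k ∧ w ∉ FmA A L }

end System

/-! ### The boundary of `F n` -/

/-- An infinite reduced word. -/
def IsRed {n : ℕ} (ξ : ℕ → Letter n) : Prop := ∀ i, ξ (i + 1) ≠ linv (ξ i)

/-- The Gromov boundary `∂F_n`, realized as the space of infinite reduced words,
topologized as a subspace of the product space. -/
def Boundary (n : ℕ) : Type := { ξ : ℕ → Letter n // IsRed ξ }

instance {n : ℕ} : TopologicalSpace (Boundary n) :=
  instTopologicalSpaceSubtype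

/-- The length-`m` prefix of a boundary point. -/
def bpre {n : ℕ} (ξ : Boundary n) (m : ℕ) : List (Letter n) :=
  (List.range m).map ξ.1

/-- The reduced word of `w` is a prefix of the infinite word `ξ`. -/
def wordPrefixOf {n : ℕ} (w : F n) (ξ : Boundary n) : Prop :=
  bpre ξ (wlen w) = rword w

/-- The boundary (limit set) `∂A ⊆ ∂F_n` of a subgroup `A`. -/
def limitSet {n : ℕ} (A : Subgroup (F n)) : Set (Boundary n) :=
  { ξ | ∀ m : ℕ, ∃ a ∈ A, bpre ξ m <+: rword a }

/-- `ξ = g^{+∞}`: `ξ` is the limit of the reduced words of the powers of `g`. -/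
def IsPosLimit {n : ℕ} (g : F n) (ξ : Boundary n) : Prop :=
  ∀ m : ℕ, ∃ N : ℕ, ∀ k ≥ N, bpre ξ m <+: rword (g ^ k)

/-- The number of letters cancelled when concatenating the word `l` with the
infinite reduced word `ξ`. -/
def cancelLen {n : ℕ} (l : List (Letter n)) (ξ : ℕ → Letter n) : ℕ :=
  sSup { j | j ≤ l.length ∧ ∀ i < j, l.reverse[i]? = some (linv (ξ i)) }

/-- The sequence underlying the action of `g` on a boundary point: left multiplication
followed by cancellation. -/
def actSeq {n : ℕ} (g : F n) (ξ : ℕ → Letter n) : ℕ → Letter n :=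
  fun m =>
    if h : m < (rword g).length - cancelLen (rword g) ξ then
      (rword g).get ⟨m, by omega⟩
    else ξ (m - ((rword g).length - cancelLen (rword g) ξ) + cancelLen (rword g) ξ)

/-- The action of `F n` on its boundary: left multiplication followed by cancellation.
(The sequence `actSeq g ξ.1` is always reduced, so the first branch always applies.) -/
def bAct {n : ℕ} (g : F n) (ξ : Boundary n) : Boundary n :=
  if h : IsRed (actSeq g ξ.1) then ⟨actSeq g ξ.1, h⟩ else ξ

/-! ### The double boundary -/

/-- The diagonal action of `F n` on `Sym2 (∂F_n)`, whose restriction to the set of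
non-diagonal classes is the action on the double boundary `∂²F_n`. -/
def dbAct {n : ℕ} (g : F n) : Sym2 (Boundary n) → Sym2 (Boundary n) := Sym2.map (bAct g)

/-- `∂²𝒜`: the classes `{ξ,η}` with both endpoints in `g·∂A_i = ∂(gA_ig⁻¹)` for some
`i` and `g`. -/
def dblBndA {n r : ℕ} (A : Fin r → Subgroup (F n)) : Set (Sym2 (Boundary n)) :=
  { z | ∃ (i : Fin r) (g : F n) (ξ η : Boundary n), z = s(ξ, η) ∧
      ξ ∈ limitSet (conjSub g (A i)) ∧ η ∈ limitSet (conjSub g (A i)) }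

/-- The double boundary `∂²(F_n,𝒜)` of `F n` relative to `𝒜`, as a subset of
`Sym2 (∂F_n)`: non-diagonal classes not lying in `∂²𝒜`. -/
def relSet {n r : ℕ} (A : Fin r → Subgroup (F n)) : Set (Sym2 (Boundary n)) :=
  { z | ¬ z.IsDiag } \ dblBndA A

/-- The cylinder set `C(γ_w) ⊆ ∂²F_n` of the geodesic path from `1` to `w`. -/
def cylinder {n : ℕ} (w : F n) : Set (Sym2 (Boundary n)) :=
  { z | ∃ ξ η : Boundary n, z = s(ξ, η) ∧ ξ.1 0 ≠ η.1 0 ∧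
      (wordPrefixOf w ξ ∨ wordPrefixOf w η) }

instance {n : ℕ} : MeasurableSpace (Sym2 (Boundary n)) := borel _

/-- The action of `g ∈ F n` on `∂²(F_n,𝒜)`. (The action of `F n` preserves
`∂²(F_n,𝒜)`, so the first branch always applies.) -/
def relAct {n r : ℕ} (A : Fin r → Subgroup (F n)) (g : F n) (z : ↥(relSet A)) :
    ↥(relSet A) :=
  if h : dbAct g z.1 ∈ relSet A then ⟨dbAct g z.1, h⟩ else z

/-- The cylinder `C(γ_w)` as a subset of `∂²(F_n,𝒜)`. -/
def relCyl {n r : ℕ} (A : Fin r → Subgroup (F n)) (w : F n) : Set ↥(relSet A) :=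
  Subtype.val ⁻¹' cylinder w

/-- The translated cylinder `g·C(γ_w)` as a subset of `∂²(F_n,𝒜)`. -/
def relCylG {n r : ℕ} (A : Fin r → Subgroup (F n)) (g w : F n) : Set ↥(relSet A) :=
  Subtype.val ⁻¹' (dbAct g '' cylinder w)

/-- A relative current on `(F_n,𝒜)`: an `F_n`-invariant Radon measure on the
locally compact space `∂²(F_n,𝒜)` (finite on compacts, outer regular, inner regular
on open sets). -/
def IsRelCurrent {n r : ℕ} (A : Fin r → Subgroup (F n)) (μ : Measure ↥(relSet A)) : Prop :=
  (∀ (g : F n) (s : Set ↥(relSet A)), MeasurableSet s → μ (relAct A g ⁻¹' s) = μ s) ∧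
  μ.Regular

/-- The `F_n`-orbit of a point of `Sym2 (∂F_n)`, inside `∂²(F_n,𝒜)`. -/
def orbitOf {n r : ℕ} (A : Fin r → Subgroup (F n)) (z : Sym2 (Boundary n)) :
    Set ↥(relSet A) :=
  { y | ∃ h : F n, (y : Sym2 (Boundary n)) = dbAct h z }

/-! ### Measures from compact open sets -/

section CompactOpens

open Set Filter Topology TopologicalSpace

variable {X : Type*} [TopologicalSpace X] [T2Space X]

lemma isSetRing_isCompact_isOpen : IsSetRing {s : Set X | IsCompact s ∧ IsOpen s} where
  empty_mem := ⟨isCompact_empty, isOpen_empty⟩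
  union_mem _ _ hs ht := ⟨hs.1.union ht.1, hs.2.union ht.2⟩
  sdiff_mem _ _ hs ht := ⟨hs.1.diff ht.2, hs.2.sdiff ht.1.isClosed⟩

variable [MeasurableSpace X] [BorelSpace X] {𝓑 : Set (Set X)}

lemma exists_measure_eq_of_additive (hbasis : IsTopologicalBasis 𝓑) (hcount : 𝓑.Countable)
    (hcompact : ∀ s ∈ 𝓑, IsCompact s) (m : Set X → ENNReal) (hempty : m ∅ = 0)
    (hunion : ∀ s t, IsCompact s → IsOpen s → IsCompact t → IsOpen t → Disjoint s t →
      m (s ∪ t) = m s + m t) :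
    ∃ μ : Measure X, ∀ s, IsCompact s → IsOpen s → μ s = m s := by
  have hring := isSetRing_isCompact_isOpen (X := X)
  have := hbasis.secondCountableTopology hcount
  have hgen : ‹MeasurableSpace X› = .generateFrom {s : Set X | IsCompact s ∧ IsOpen s} := by
    refine (BorelSpace.measurable_eq.trans hbasis.borel_eq_generateFrom).trans_le ?_ |>.antisymm ?_
    · exact MeasurableSpace.generateFrom_mono fun s hs => ⟨hcompact s hs, hbasis.isOpen hs⟩
    · exact MeasurableSpace.generateFrom_le fun s hs => hs.2.measurableSet
  let content : AddContent ENNReal {s : Set X | IsCompact s ∧ IsOpen s} :=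
    hring.addContent_of_union m hempty fun hs ht hst => hunion _ _ hs.1 hs.2 ht.1 ht.2 hst
  have hsigma : content.IsSigmaSubadditive := fun f hf hU => by
    obtain ⟨I, hI⟩ := hU.1.elim_finite_subcover f (fun i => (hf i).2) subset_rfl
    have hIU : ⋃ i ∈ I, f i ∈ {s : Set X | IsCompact s ∧ IsOpen s} :=
      hring.biUnion_mem I fun i _ => hf i
    calc content (⋃ i, f i) ≤ content (⋃ i ∈ I, f i) :=
          addContent_mono hring.isSetSemiring hU hIU hI
      _ ≤ ∑ i ∈ I, content (f i) := addContent_biUnion_le hring fun i _ => hf i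
      _ ≤ ∑' i, content (f i) := ENNReal.sum_le_tsum I
  exact ⟨content.measure hring.isSetSemiring hgen.le hsigma, fun s hs hs' =>
    content.measure_eq hring.isSetSemiring hgen hsigma ⟨hs, hs'⟩⟩

lemma regular_of_basis (hbasis : IsTopologicalBasis 𝓑) (hcount : 𝓑.Countable)
    (hcompact : ∀ s ∈ 𝓑, IsCompact s) {μ : Measure X} (hfin : ∀ s ∈ 𝓑, μ s ≠ ⊤) :
    μ.Regular := by
  have := hbasis.secondCountableTopology hcount
  have hnhds : ∀ x, ∃ s ∈ 𝓑, s ∈ 𝓝 x := fun x => by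
    obtain ⟨s, hs, hx, -⟩ := hbasis.mem_nhds_iff.1 (univ_mem (f := 𝓝 x))
    exact ⟨s, hs, hbasis.mem_nhds hs hx⟩
  have : WeaklyLocallyCompactSpace X := ⟨fun x => by
    obtain ⟨s, hs, hx⟩ := hnhds x
    exact ⟨s, hcompact s hs, hx⟩⟩
  have : IsLocallyFiniteMeasure μ := ⟨fun x => by
    obtain ⟨s, hs, hx⟩ := hnhds x
    exact ⟨s, hx, (hfin s hs).lt_top⟩⟩
  infer_instance

/- The limit is taken along a nonprincipal ultrafilter. This makes it exist on every compact open
set and be additive there, while on the sets `U i` it can only be the eventual value. -/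
lemma exists_regular_measure_eq {ι : Type*} [Countable ι] {U : ι → Set X}
    (hbasis : IsTopologicalBasis (range U)) (hcompact : ∀ i, IsCompact (U i))
    {μ : ℕ → Measure X} {c : ι → ENNReal} (hc : ∀ i, ∀ᶠ k in atTop, μ k (U i) = c i)
    (hfin : ∀ i, c i ≠ ⊤) : ∃ ν : Measure X, ν.Regular ∧ ∀ i, ν (U i) = c i := by
  let m : Set X → ENNReal := fun s => ((hyperfilter ℕ).map fun k => μ k s).lim
  have hm : ∀ s, Tendsto (fun k => μ k s) (hyperfilter ℕ) (𝓝 (m s)) := fun s =>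
    ((hyperfilter ℕ).map fun k => μ k s).le_nhds_lim
  have hcompact' : ∀ s ∈ range U, IsCompact s := forall_mem_range.2 hcompact
  obtain ⟨ν, hν⟩ := exists_measure_eq_of_additive hbasis (countable_range U) hcompact' m
    (tendsto_nhds_unique (hm ∅) (by simp only [measure_empty, tendsto_const_nhds]))
    fun s t _ _ _ ht hst => tendsto_nhds_unique (hm (s ∪ t)) <| by
      simp only [measure_union hst ht.measurableSet]
      exact (hm s).add (hm t)
  have hνc : ∀ i, ν (U i) = c i := fun i => by
    rw [hν _ (hcompact i) (hbasis.isOpen (mem_range_self i))]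
    have hlim := (hc i).filter_mono Nat.hyperfilter_le_atTop
    exact tendsto_nhds_unique (hm _) (tendsto_const_nhds.congr' (hlim.mono fun _ h => h.symm))
  refine ⟨ν, regular_of_basis hbasis (countable_range U) hcompact' ?_, hνc⟩
  exact forall_mem_range.2 fun i => (hνc i).symm ▸ hfin i

end CompactOpens

/-! ### Reduced words -/

section Words

variable {n : ℕ}

/-- The first letter of the reduced word of `g`, and `none` for `g = 1`. -/
def firstLetter (g : F n) : Option (Letter n) := (rword g).head?

lemma rword_mk {l : List (Letter n)} (h : FreeGroup.IsReduced l) :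
    rword (FreeGroup.mk l) = l := by
  rw [rword, FreeGroup.toWord_mk, h.reduce_eq]

lemma isReduced_rword (g : F n) : FreeGroup.IsReduced (rword g) := FreeGroup.isReduced_toWord

lemma mk_rword (g : F n) : FreeGroup.mk (rword g) = g := FreeGroup.mk_toWord

lemma wlen_one : wlen (1 : F n) = 0 := FreeGroup.norm_one

lemma wlen_inv (g : F n) : wlen g⁻¹ = wlen g := FreeGroup.norm_inv_eq

lemma wlen_eq_zero {g : F n} : wlen g = 0 ↔ g = 1 := FreeGroup.norm_eq_zero

lemma wlen_mul_le (g h : F n) : wlen (g * h) ≤ wlen g + wlen h := FreeGroup.norm_mul_le g h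

lemma rword_mul_of_wlen {u v : F n} (h : wlen (u * v) = wlen u + wlen v) :
    rword (u * v) = rword u ++ rword v :=
  (FreeGroup.toWord_mul_sublist u v).eq_of_length (by rw [List.length_append]; exact h)

lemma firstLetter_eq_none {g : F n} : firstLetter g = none ↔ g = 1 := by
  rw [firstLetter, List.head?_eq_none_iff, rword, FreeGroup.toWord_eq_nil_iff]

lemma exists_firstLetter {u : F n} (h : u ≠ 1) : ∃ b, firstLetter u = some b :=
  Option.ne_none_iff_exists'.1 (mt firstLetter_eq_none.1 h)

lemma linv_linv (x : Letter n) : linv (linv x) = x := by simp [linv]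

lemma linv_ne (x : Letter n) : linv x ≠ x := by simp [linv, Prod.ext_iff]

lemma fst_imp_snd_iff_ne_linv (a b : Letter n) : (a.1 = b.1 → a.2 = b.2) ↔ b ≠ linv a := by
  rw [linv, ne_eq, Prod.ext_iff, not_and, Bool.not_eq_not, eq_comm (a := a.1), eq_comm (a := a.2)]

lemma getLast?_rword_inv (g : F n) : (rword g⁻¹).getLast? = (firstLetter g).map linv := by
  rw [rword, FreeGroup.toWord_inv, firstLetter, rword, FreeGroup.invRev, List.getLast?_reverse,
    List.head?_map]
  rfl

lemma rword_mul {u v : F n} (h : firstLetter u⁻¹ ≠ firstLetter v) :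
    rword (u * v) = rword u ++ rword v := by
  rw [rword, FreeGroup.toWord_mul]
  refine FreeGroup.IsReduced.reduce_eq
    (List.IsChain.append (isReduced_rword u) (isReduced_rword v) ?_)
  intro x (hx : x ∈ (rword u).getLast?) y hy
  rw [fst_imp_snd_iff_ne_linv]
  rintro rfl
  have hlast := getLast?_rword_inv u⁻¹
  rw [inv_inv, Option.mem_def.1 hx, eq_comm, Option.map_eq_some_iff] at hlast
  obtain ⟨a, ha, rfl⟩ := hlast
  rw [linv_linv] at hy
  exact h (ha.trans hy.symm)

lemma wlen_mul {u v : F n} (h : firstLetter u⁻¹ ≠ firstLetter v) :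
    wlen (u * v) = wlen u + wlen v := by
  rw [wlen, rword_mul h, List.length_append, wlen, wlen]

lemma firstLetter_mul {u v : F n} (h : firstLetter u⁻¹ ≠ firstLetter v) (hu : u ≠ 1) :
    firstLetter (u * v) = firstLetter u := by
  rw [firstLetter, rword_mul h, firstLetter,
    List.head?_append_of_ne_nil (rword u) (mt FreeGroup.toWord_eq_nil_iff.1 hu)]

lemma rword_letterE (b : Letter n) : rword (letterE b) = [b] :=
  rword_mk (List.isChain_singleton b)

lemma firstLetter_letterE (b : Letter n) : firstLetter (letterE b) = some b := by
  rw [firstLetter, rword_letterE, List.head?_cons]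

lemma wlen_letterE (b : Letter n) : wlen (letterE b) = 1 := by
  rw [wlen, rword_letterE, List.length_singleton]

lemma letterE_inv (b : Letter n) : (letterE b)⁻¹ = letterE (linv b) := by
  simp [letterE, FreeGroup.inv_mk, FreeGroup.invRev, linv]

lemma exists_eq_letterE_mul {u : F n} {b : Letter n} (h : firstLetter u = some b) :
    ∃ v, u = letterE b * v ∧ wlen u = wlen v + 1 := by
  obtain ⟨t, ht⟩ := List.head?_eq_some_iff.1 h
  have hred : FreeGroup.IsReduced t :=
    (ht ▸ isReduced_rword u).infix (List.suffix_cons _ _).isInfix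
  refine ⟨FreeGroup.mk t, ?_, ?_⟩
  · rw [letterE, FreeGroup.mul_mk, ← mk_rword u, ht, List.singleton_append]
  · rw [wlen, ht, wlen, rword_mk hred, List.length_cons]

lemma wlen_inv_mul_add_two_le {u v : F n} (h : firstLetter u = firstLetter v) (hu : u ≠ 1) :
    wlen (u⁻¹ * v) + 2 ≤ wlen u + wlen v := by
  obtain ⟨b, hb⟩ := exists_firstLetter hu
  obtain ⟨u', rfl, hu'⟩ := exists_eq_letterE_mul hb
  obtain ⟨v', rfl, hv'⟩ := exists_eq_letterE_mul (h ▸ hb)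
  rw [show (letterE b * u')⁻¹ * (letterE b * v') = u'⁻¹ * v' by group, hu', hv']
  have := wlen_mul_le u'⁻¹ v'
  rw [wlen_inv] at this
  lia

lemma wlen_mul_eq_add_iff {u v : F n} (hu : u ≠ 1) :
    wlen (u * v) = wlen u + wlen v ↔ firstLetter u⁻¹ ≠ firstLetter v := by
  refine ⟨fun h hne => ?_, wlen_mul⟩
  have := wlen_inv_mul_add_two_le hne (inv_ne_one.2 hu)
  rw [inv_inv, wlen_inv] at this
  lia

lemma firstLetter_mul_of_wlen_lt {u t : F n} (h : wlen t < wlen u) :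
    firstLetter (u * t) = firstLetter u := by
  by_contra hne
  have := wlen_mul (u := u⁻¹) (v := u * t) (by rw [inv_inv]; exact Ne.symm hne)
  rw [inv_mul_cancel_left, wlen_inv] at this
  lia

end Words

/-! ### Directions and segments in the Cayley tree -/

section Tree

variable {n : ℕ}

/-- The direction in which the vertex `x` is seen from the vertex `v`: the label of the first edge
of the geodesic from `v` to `x`, and `none` for `x = v`. -/
def dir (v x : F n) : Option (Letter n) := firstLetter (v⁻¹ * x)

/-- The vertex set of the geodesic from `x` to `y`. -/
def seg (x y : F n) : Set (F n) := {v | dist' x v + dist' v y = dist' x y}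

lemma dist'_comm (x y : F n) : dist' x y = dist' y x := by
  rw [dist', ← wlen_inv, mul_inv_rev, inv_inv, dist']

lemma dist'_triangle (x y z : F n) : dist' x z ≤ dist' x y + dist' y z := by
  simpa only [dist', mul_assoc, mul_inv_cancel_left] using wlen_mul_le (x⁻¹ * y) (y⁻¹ * z)

lemma dist'_eq_zero {x y : F n} : dist' x y = 0 ↔ x = y := by
  rw [dist', wlen_eq_zero, inv_mul_eq_one]

lemma dist'_one_left (x : F n) : dist' 1 x = wlen x := by rw [dist', inv_one, one_mul]

lemma dist'_mul_left (g x y : F n) : dist' (g * x) (g * y) = dist' x y := by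
  rw [dist', dist', mul_inv_rev, mul_assoc, inv_mul_cancel_left]

lemma dir_mul_left (g v x : F n) : dir (g * v) (g * x) = dir v x := by
  rw [dir, dir, mul_inv_rev, mul_assoc, inv_mul_cancel_left]

lemma dir_eq_none {v x : F n} : dir v x = none ↔ v = x := by
  rw [dir, firstLetter_eq_none, inv_mul_eq_one]

lemma dir_self (v : F n) : dir v v = none := dir_eq_none.2 rfl

lemma exists_dir {v x : F n} (h : v ≠ x) : ∃ b, dir v x = some b :=
  Option.ne_none_iff_exists'.1 (mt dir_eq_none.1 h)

lemma seg_symm (x y : F n) : seg x y = seg y x := by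
  ext v
  rw [seg, seg, Set.mem_ofPred_eq, Set.mem_ofPred_eq, dist'_comm x v, dist'_comm v y,
    dist'_comm x y, add_comm]

lemma mem_seg_mul_left {g x y v : F n} : g * v ∈ seg (g * x) (g * y) ↔ v ∈ seg x y := by
  simp only [seg, Set.mem_ofPred_eq, dist'_mul_left]

lemma left_mem_seg (x y : F n) : x ∈ seg x y := by
  rw [seg, Set.mem_ofPred_eq, dist'_eq_zero.2 rfl, zero_add]

lemma right_mem_seg (x y : F n) : y ∈ seg x y := seg_symm y x ▸ left_mem_seg y x

lemma mem_seg_of_dir_ne {x y v : F n} (h : dir v x ≠ dir v y) : v ∈ seg x y := by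
  have h' : firstLetter (x⁻¹ * v)⁻¹ ≠ firstLetter (v⁻¹ * y) := by
    rwa [mul_inv_rev, inv_inv]
  have := wlen_mul h'
  rw [mul_assoc, mul_inv_cancel_left] at this
  exact this.symm

lemma dist'_add_two_le {x y v : F n} (h : dir v x = dir v y) (hv : v ≠ x) :
    dist' x y + 2 ≤ dist' x v + dist' v y := by
  have := wlen_inv_mul_add_two_le h (mt inv_mul_eq_one.1 hv)
  rwa [mul_inv_rev, inv_inv, mul_assoc, mul_inv_cancel_left, ← dist', ← dist', ← dist',
    dist'_comm v x] at this

lemma mem_seg_iff_dir_ne_of_ne {x y v : F n} (hv : v ≠ x) :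
    v ∈ seg x y ↔ dir v x ≠ dir v y := by
  refine ⟨fun hseg h => ?_, mem_seg_of_dir_ne⟩
  have := dist'_add_two_le h hv
  rw [seg, Set.mem_ofPred_eq] at hseg
  lia

lemma mem_seg_iff_dir_ne {x y v : F n} (hxy : x ≠ y) : v ∈ seg x y ↔ dir v x ≠ dir v y := by
  rcases eq_or_ne v x with rfl | hvx
  · rw [dir_self]
    exact iff_of_true (left_mem_seg _ _) fun h => hxy (dir_eq_none.1 h.symm)
  · exact mem_seg_iff_dir_ne_of_ne hvx

lemma dir_eq_dir_one {v x : F n} (hne : v ≠ x) (h : wlen x ≤ wlen v) : dir v x = dir v 1 := by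
  by_contra hdir
  have hseg := mem_seg_of_dir_ne hdir
  have hpos : dist' x v ≠ 0 := mt dist'_eq_zero.1 hne.symm
  rw [seg, Set.mem_ofPred_eq, dist'_comm v, dist'_comm x 1, dist'_one_left, dist'_one_left] at hseg
  lia

lemma rword_of_mem_seg {x y v : F n} (h : v ∈ seg x y) :
    rword (x⁻¹ * y) = rword (x⁻¹ * v) ++ rword (v⁻¹ * y) := by
  have hxy : x⁻¹ * v * (v⁻¹ * y) = x⁻¹ * y := by rw [mul_assoc, mul_inv_cancel_left]
  rw [← hxy]
  refine rword_mul_of_wlen ?_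
  rw [hxy]
  exact h.symm

lemma seg_subset_seg {x y x' y' : F n}
    (h : dist' x x' + dist' x' y' + dist' y' y = dist' x y) : seg x' y' ⊆ seg x y := by
  intro v hv
  have h1 := dist'_triangle x x' v
  have h2 := dist'_triangle v y' y
  have h3 := dist'_triangle x v y
  rw [seg, Set.mem_ofPred_eq] at hv ⊢
  lia

lemma mem_seg_of_dist'_le {x y v w : F n} (hv : v ∈ seg x y) (hw : w ∈ seg x y)
    (h : dist' x v ≤ dist' x w) : v ∈ seg x w := by
  by_cases hdir : dir v x = dir v w
  · by_cases hvy : dir v w = dir v y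
    · rcases eq_or_ne x y with rfl | hxy
      · rw [seg, Set.mem_ofPred_eq, dist'_eq_zero.2 rfl] at hv
        obtain rfl : x = v := dist'_eq_zero.1 (by lia)
        exact left_mem_seg x w
      · exact absurd (hdir.trans hvy) ((mem_seg_iff_dir_ne hxy).1 hv)
    · have hvwy := mem_seg_of_dir_ne hvy
      have hvw : dist' w v = 0 := by
        rw [seg, Set.mem_ofPred_eq] at hv hw hvwy
        have := dist'_triangle x w v
        lia
      exact dist'_eq_zero.1 hvw ▸ right_mem_seg x w
  · exact mem_seg_of_dir_ne hdir

lemma seg_subset_seg_of_mem {x y v w : F n} (hv : v ∈ seg x y) (hw : w ∈ seg x y) :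
    seg v w ⊆ seg x y := by
  wlog h : dist' x v ≤ dist' x w generalizing v w
  · rw [seg_symm]
    exact this hw hv (le_of_not_ge h)
  have hvw := mem_seg_of_dist'_le hv hw h
  refine seg_subset_seg ?_
  rw [seg, Set.mem_ofPred_eq] at hw hvw
  lia

lemma dir_mul_letterE (v : F n) (b : Letter n) : dir v (v * letterE b) = some b := by
  rw [dir, inv_mul_cancel_left, firstLetter_letterE]

lemma dist'_mul_letterE (v : F n) (b : Letter n) : dist' v (v * letterE b) = 1 := by
  rw [dist', inv_mul_cancel_left, wlen_letterE]

lemma dist'_mul_letterE_of_dir {v x : F n} {b : Letter n} (h : dir v x = some b) :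
    dist' (v * letterE b) x + 1 = dist' v x := by
  obtain ⟨u, hu, hlen⟩ := exists_eq_letterE_mul h
  rw [dist', dist', hlen, mul_inv_rev, mul_assoc, hu, inv_mul_cancel_left]

lemma exists_seg_subset_insert {x y : F n} (h : x ≠ y) :
    ∃ y' ∈ seg x y, dist' y' y = 1 ∧ seg x y ⊆ insert y (seg x y') := by
  obtain ⟨b, hb⟩ := exists_dir h.symm
  have hx := dist'_mul_letterE_of_dir hb
  have hy := dist'_mul_letterE y b
  have hcomm := dist'_comm x y
  refine ⟨y * letterE b, ?_, by rw [dist'_comm, hy], fun v hv => ?_⟩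
  · rw [seg, Set.mem_ofPred_eq, dist'_comm x, dist'_comm _ y]
    lia
  · refine or_iff_not_imp_left.2 fun hvy => ?_
    have hvb : dir y v = some b := by
      rw [← hb]
      by_contra hdir
      have hyv := mem_seg_of_dir_ne hdir
      have hpos : dist' v y ≠ 0 := mt dist'_eq_zero.1 hvy
      rw [seg, Set.mem_ofPred_eq] at hv hyv
      have := dist'_comm v y
      have := dist'_comm x v
      lia
    have hv' := dist'_mul_letterE_of_dir hvb
    rw [seg, Set.mem_ofPred_eq, dist'_comm v, dist'_comm x (y * _)]
    rw [seg, Set.mem_ofPred_eq, dist'_comm v] at hv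
    lia

end Tree

/-! ### Axes and minimal subtrees -/

section Axes

variable {n : ℕ}

lemma firstLetter_pow {c : F n} (h : firstLetter c ≠ firstLetter c⁻¹) {k : ℕ} (hk : k ≠ 0) :
    firstLetter (c ^ k) = firstLetter c := by
  have hc : c ≠ 1 := by rintro rfl; simp at h
  induction k, Nat.one_le_iff_ne_zero.2 hk using Nat.le_induction with
  | base => rw [pow_one]
  | succ k _ ih => rw [pow_succ', firstLetter_mul _ hc]; rw [ih (by lia)]; exact h.symm

lemma wlen_pow {c : F n} (h : firstLetter c ≠ firstLetter c⁻¹) (k : ℕ) :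
    wlen (c ^ k) = k * wlen c := by
  induction k with
  | zero => rw [pow_zero, wlen_one, zero_mul]
  | succ k ih =>
    rcases eq_or_ne k 0 with rfl | hk
    · rw [zero_add, pow_one, one_mul]
    · rw [pow_succ', wlen_mul (by rw [firstLetter_pow h hk]; exact h.symm), ih, add_mul, one_mul,
        add_comm]

lemma wlen_pow_le (c : F n) (k : ℕ) : wlen (c ^ k) ≤ k * wlen c := by
  induction k with
  | zero => rw [pow_zero, wlen_one, zero_mul]
  | succ k ih =>
    have := wlen_mul_le (c ^ k) c
    rw [pow_succ, add_mul]
    lia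

lemma wlen_conj_pow_le (x c : F n) (k : ℕ) :
    wlen (c ^ k) ≤ 2 * wlen x + k * wlen (x⁻¹ * c * x) := by
  have hpow : c ^ k = x * (x⁻¹ * c * x) ^ k * x⁻¹ := by
    rw [← conj_pow]
    group
  have h1 := wlen_mul_le (x * (x⁻¹ * c * x) ^ k) x⁻¹
  have h2 := wlen_mul_le x ((x⁻¹ * c * x) ^ k)
  have h3 := wlen_pow_le (x⁻¹ * c * x) k
  rw [wlen_inv] at h1
  rw [hpow]
  lia

/- `|c ^ k| = k |c|` exceeds the length of the `k`-th power of a shorter conjugate by more than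
conjugation can account for. -/
lemma wlen_le_wlen_conj {c : F n} (h : firstLetter c ≠ firstLetter c⁻¹) (x : F n) :
    wlen c ≤ wlen (x⁻¹ * c * x) := by
  by_contra! hlt
  have hpow := wlen_conj_pow_le x c (2 * wlen x + 1)
  rw [wlen_pow h] at hpow
  nlinarith

lemma exists_wlen_conj_lt {c : F n} (hc : c ≠ 1) (h : firstLetter c = firstLetter c⁻¹) :
    ∃ x : F n, wlen (x⁻¹ * c * x) < wlen c := by
  obtain ⟨b, hb⟩ := exists_firstLetter hc
  have hcb : wlen (c * letterE b) + 2 ≤ wlen c + 1 := by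
    have := wlen_inv_mul_add_two_le (u := c⁻¹) (v := letterE b)
      (by rw [firstLetter_letterE, ← h, hb]) (inv_ne_one.2 hc)
    rwa [inv_inv, wlen_inv, wlen_letterE] at this
  have hlong : 1 < wlen c := by
    by_contra! hle
    have hone : c * letterE b = 1 := wlen_eq_zero.1 (by lia)
    rw [eq_inv_of_mul_eq_one_left hone, letterE_inv, firstLetter_letterE] at hb
    exact linv_ne b (Option.some_inj.1 hb)
  have hfirst : firstLetter (letterE b) = firstLetter (c * letterE b) := by
    rw [firstLetter_letterE, firstLetter_mul_of_wlen_lt (by rwa [wlen_letterE]), hb]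
  have hb1 : letterE b ≠ 1 := by
    rw [← dir_mul_letterE 1 b, one_mul] at hb
    rintro h1
    rw [h1, dir_self, firstLetter_eq_none] at hb
    exact hc hb
  have := wlen_inv_mul_add_two_le hfirst hb1
  rw [wlen_letterE, ← mul_assoc] at this
  exact ⟨letterE b, by lia⟩

lemma cycLen_conj (h a : F n) : cycLen (h⁻¹ * a * h) = cycLen a := by
  refine congrArg sInf (Set.ext fun m => (Equiv.mulLeft h).exists_congr fun x => ?_)
  rw [Equiv.coe_mulLeft, show (h * x)⁻¹ * a * (h * x) = x⁻¹ * (h⁻¹ * a * h) * x by group]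

lemma wlen_eq_cycLen_iff {c : F n} (hc : c ≠ 1) :
    wlen c = cycLen c ↔ firstLetter c ≠ firstLetter c⁻¹ := by
  constructor
  · intro hmin heq
    obtain ⟨x, hx⟩ := exists_wlen_conj_lt hc heq
    have : cycLen c ≤ wlen (x⁻¹ * c * x) := Nat.sInf_le ⟨x, rfl⟩
    lia
  · intro h
    refine le_antisymm (le_csInf ⟨_, 1, rfl⟩ ?_)
      (Nat.sInf_le ⟨1, by rw [inv_one, one_mul, mul_one]⟩)
    rintro m ⟨x, rfl⟩
    exact wlen_le_wlen_conj h x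

lemma mem_conjSub {B : Subgroup (F n)} {g x : F n} : x ∈ conjSub g B ↔ g⁻¹ * x * g ∈ B := by
  rw [conjSub, Subgroup.mem_map_equiv, MulAut.conj_symm_apply]

lemma conjSub_conjSub (g h : F n) (B : Subgroup (F n)) :
    conjSub g (conjSub h B) = conjSub (g * h) B := by
  ext x
  rw [mem_conjSub, mem_conjSub, mem_conjSub]
  congr! 1
  group

lemma mul_mem_treeVerts_conjSub {B : Subgroup (F n)} {g h : F n} :
    g * h ∈ treeVerts (conjSub g B) ↔ h ∈ treeVerts B := by
  refine (MulAut.conj g).symm.toEquiv.exists_congr fun a => ?_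
  change _ ↔ (MulAut.conj g).symm a ∈ B ∧ (MulAut.conj g).symm a ≠ 1 ∧
    wlen (h⁻¹ * (MulAut.conj g).symm a * h) = cycLen ((MulAut.conj g).symm a)
  rw [MulAut.conj_symm_apply, mem_conjSub, cycLen_conj,
    show h⁻¹ * (g⁻¹ * a * g) * h = (g * h)⁻¹ * a * (g * h) by group, ne_eq, ne_eq,
    mul_assoc g⁻¹, inv_mul_eq_one, right_eq_mul]

lemma one_mem_treeVerts_iff {B : Subgroup (F n)} :
    1 ∈ treeVerts B ↔ ∃ a ∈ B, firstLetter a ≠ firstLetter a⁻¹ := by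
  refine exists_congr fun a => and_congr_right fun _ => ?_
  rw [inv_one, one_mul, mul_one]
  refine ⟨fun h => (wlen_eq_cycLen_iff h.1).1 h.2, fun h => ?_⟩
  have ha : a ≠ 1 := by rintro rfl; simp at h
  exact ⟨ha, (wlen_eq_cycLen_iff ha).2 h⟩

/- If neither `x` nor `y` is cyclically reduced, then `x * y` is. -/
lemma one_mem_treeVerts_of_firstLetter_ne {B : Subgroup (F n)} {x y : F n} (hx : x ∈ B) (hy : y ∈ B)
    (hx1 : x ≠ 1) (hy1 : y ≠ 1) (h : firstLetter x ≠ firstLetter y) : 1 ∈ treeVerts B := by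
  rw [one_mem_treeVerts_iff]
  by_contra! hB
  have hxy : firstLetter (x * y) = firstLetter x := firstLetter_mul (by rwa [← hB x hx]) hx1
  have hyx : firstLetter (x * y)⁻¹ = firstLetter y := by
    rw [mul_inv_rev, hB y hy]
    refine firstLetter_mul ?_ (inv_ne_one.2 hy1)
    rw [inv_inv, ← hB x hx]
    exact h.symm
  exact h (hxy.symm.trans ((hB _ (B.mul_mem hx hy)).trans hyx))

end Axes

/-! ### Rays and geodesics -/

section Rays

variable {n : ℕ}

lemma rword_prefix_iff_mem_seg {p a : F n} : rword p <+: rword a ↔ p ∈ seg 1 a := by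
  constructor
  · rintro ⟨t, ht⟩
    have hred : FreeGroup.IsReduced t :=
      (ht ▸ isReduced_rword a).infix (List.suffix_append _ _).isInfix
    have ha : p⁻¹ * a = FreeGroup.mk t := by
      rw [inv_mul_eq_iff_eq_mul, ← mk_rword a, ← ht, ← FreeGroup.mul_mk, mk_rword]
    rw [seg, Set.mem_ofPred_eq, dist'_one_left, dist'_one_left, dist', ha, wlen, wlen, wlen,
      rword_mk hred, ← ht, List.length_append]
  · intro h
    have := rword_of_mem_seg h
    rw [inv_one, one_mul, one_mul] at this
    exact ⟨_, this.symm⟩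

lemma dir_eq_dir_of_mem_seg_one {v p a : F n} (hv : wlen v ≤ wlen p) (hne : v ≠ p)
    (h : p ∈ seg 1 a) : dir v a = dir v p := by
  by_cases hpa : dir p 1 = dir p a
  · rcases eq_or_ne 1 a with rfl | ha
    · rw [seg, Set.mem_ofPred_eq, dist'_eq_zero.2 rfl] at h
      rw [dist'_eq_zero.1 (Nat.eq_zero_of_add_eq_zero_left h)]
    · exact absurd hpa ((mem_seg_iff_dir_ne ha).1 h)
  · rw [← dir_eq_dir_one hne.symm hv] at hpa
    have hp := mem_seg_of_dir_ne hpa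
    by_contra hdir
    have hv := mem_seg_of_dir_ne hdir
    have hpos : dist' v p ≠ 0 := mt dist'_eq_zero.1 hne
    rw [seg, Set.mem_ofPred_eq] at hp hv
    rw [dist'_comm a v, dist'_comm a p] at hv
    lia

/-- The vertex at distance `m` from `1` on the geodesic ray from `1` to `ξ`. -/
def ray (ξ : Boundary n) (m : ℕ) : F n := FreeGroup.mk (bpre ξ m)

/-- The direction in which the boundary point `ξ` is seen from the vertex `v`. All points of the
ray to `ξ` beyond distance `|v|` from `1` are seen from `v` in the same direction. -/
def rayDir (v : F n) (ξ : Boundary n) : Option (Letter n) := dir v (ray ξ (wlen v + 1))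

/-- The vertex set of the bi-infinite geodesic from `ξ` to `ζ`; it is empty for `ξ = ζ`. -/
def geod (ξ ζ : Boundary n) : Set (F n) := {v | rayDir v ξ ≠ rayDir v ζ}

lemma bpre_succ (ξ : Boundary n) (m : ℕ) : bpre ξ (m + 1) = bpre ξ m ++ [ξ.1 m] := by
  rw [bpre, List.range_succ, List.map_append, List.map_singleton, bpre]

lemma isReduced_bpre (ξ : Boundary n) (m : ℕ) : FreeGroup.IsReduced (bpre ξ m) := by
  rw [FreeGroup.IsReduced, List.isChain_iff_getElem]
  intro i hi
  rw [fst_imp_snd_iff_ne_linv]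
  simp only [bpre, List.getElem_map, List.getElem_range]
  exact ξ.2 i

lemma rword_ray (ξ : Boundary n) (m : ℕ) : rword (ray ξ m) = bpre ξ m :=
  rword_mk (isReduced_bpre ξ m)

lemma wlen_ray (ξ : Boundary n) (m : ℕ) : wlen (ray ξ m) = m := by
  rw [wlen, rword_ray, bpre, List.length_map, List.length_range]

lemma ray_succ (ξ : Boundary n) (m : ℕ) : ray ξ (m + 1) = ray ξ m * letterE (ξ.1 m) := by
  rw [ray, bpre_succ, ray, letterE, FreeGroup.mul_mk]

lemma ray_eq_iff {ξ ζ : Boundary n} {m : ℕ} : ray ξ m = ray ζ m ↔ ∀ i < m, ξ.1 i = ζ.1 i := by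
  rw [← FreeGroup.toWord_inj, ← rword, ← rword, rword_ray, rword_ray, bpre, bpre, List.map_inj_left]
  simp only [List.mem_range]

lemma ray_ne_of_le {ξ ζ : Boundary n} {m k : ℕ} (h : m ≤ k) (hne : ray ξ m ≠ ray ζ m) :
    ray ξ k ≠ ray ζ k :=
  mt (fun hk => ray_eq_iff.2 fun i hi => ray_eq_iff.1 hk i (hi.trans_le h)) hne

lemma exists_ray_ne {ξ ζ : Boundary n} (h : ξ ≠ ζ) : ∃ m, ray ξ m ≠ ray ζ m := by
  by_contra! hray
  exact h (Subtype.ext (funext fun m => ray_eq_iff.1 (hray (m + 1)) m m.lt_succ_self))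

lemma wordPrefixOf_iff {w : F n} {ξ : Boundary n} : wordPrefixOf w ξ ↔ ray ξ (wlen w) = w := by
  rw [wordPrefixOf, ← rword_ray]
  exact FreeGroup.toWord_inj

lemma mem_limitSet_iff {B : Subgroup (F n)} {ξ : Boundary n} :
    ξ ∈ limitSet B ↔ ∀ m, ∃ a ∈ B, ray ξ m ∈ seg 1 a := by
  simp only [← rword_prefix_iff_mem_seg, rword_ray]
  rfl

lemma ray_mem_seg_one (ξ : Boundary n) {m k : ℕ} (h : m ≤ k) : ray ξ m ∈ seg 1 (ray ξ k) := by
  rw [← rword_prefix_iff_mem_seg, rword_ray, rword_ray, bpre, bpre, ← Nat.add_sub_cancel' h,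
    List.range_add, List.map_append]
  exact List.prefix_append _ _

lemma dir_ray_of_le {v : F n} {ξ : Boundary n} {m k : ℕ} (hv : wlen v ≤ m) (hne : v ≠ ray ξ m)
    (hk : m ≤ k) : dir v (ray ξ k) = dir v (ray ξ m) :=
  dir_eq_dir_of_mem_seg_one (by rwa [wlen_ray]) hne (ray_mem_seg_one ξ hk)

lemma rayDir_eq {v : F n} {ξ : Boundary n} {m : ℕ} (hv : wlen v ≤ m) (hne : v ≠ ray ξ m) :
    rayDir v ξ = dir v (ray ξ m) := by
  rcases hv.eq_or_lt with rfl | hlt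
  · exact dir_ray_of_le le_rfl hne (Nat.le_succ _)
  · refine (dir_ray_of_le (Nat.le_succ _) ?_ hlt).symm
    rintro h
    have := congrArg wlen h
    rw [wlen_ray] at this
    lia

lemma rayDir_eq_of_lt {v : F n} {ξ : Boundary n} {m : ℕ} (hv : wlen v < m) :
    rayDir v ξ = dir v (ray ξ m) :=
  rayDir_eq hv.le (by rintro h; rw [h, wlen_ray] at hv; exact hv.false)

lemma rayDir_ray (ξ : Boundary n) (m : ℕ) : rayDir (ray ξ m) ξ = some (ξ.1 m) := by
  rw [rayDir, wlen_ray, ray_succ, dir_mul_letterE]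

lemma rayDir_ray_ne_dir_one (ξ : Boundary n) (m : ℕ) :
    rayDir (ray ξ m) ξ ≠ dir (ray ξ m) 1 := by
  rcases eq_or_ne (ray ξ m) 1 with h | -
  · rw [rayDir_ray, h, dir_self]
    exact Option.some_ne_none _
  · have hne : (1 : F n) ≠ ray ξ (m + 1) := by
      rw [ne_eq, eq_comm, ← wlen_eq_zero, wlen_ray]
      exact m.succ_ne_zero
    rw [rayDir_eq_of_lt (m := m + 1) (by rw [wlen_ray]; exact m.lt_succ_self)]
    exact ((mem_seg_iff_dir_ne hne).1 (ray_mem_seg_one ξ m.le_succ)).symm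

lemma geod_symm (ξ ζ : Boundary n) : geod ξ ζ = geod ζ ξ := Set.ext fun _ => ne_comm

lemma ray_mem_geod {ξ ζ : Boundary n} {m : ℕ} (hne : ray ξ m ≠ ray ζ m) : ray ξ m ∈ geod ξ ζ := by
  have hζ : rayDir (ray ξ m) ζ = dir (ray ξ m) 1 := by
    rw [rayDir_eq (wlen_ray ξ m).le hne]
    exact dir_eq_dir_one hne (by rw [wlen_ray, wlen_ray])
  rw [geod, Set.mem_ofPred_eq, hζ]
  exact rayDir_ray_ne_dir_one ξ m

lemma mem_geod_iff_mem_seg {ξ ζ : Boundary n} {v : F n} {m : ℕ} (hv : wlen v ≤ m)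
    (hne : ray ξ m ≠ ray ζ m) : v ∈ geod ξ ζ ↔ v ∈ seg (ray ξ m) (ray ζ m) := by
  rcases eq_or_ne v (ray ξ m) with rfl | hξ
  · exact iff_of_true (ray_mem_geod hne) (left_mem_seg _ _)
  rcases eq_or_ne v (ray ζ m) with rfl | hζ
  · exact iff_of_true (geod_symm ζ ξ ▸ ray_mem_geod hne.symm) (right_mem_seg _ _)
  rw [mem_seg_iff_dir_ne hne, ← rayDir_eq hv hξ, ← rayDir_eq hv hζ]
  rfl

lemma ray_ne_of_mem_geod {ξ ζ : Boundary n} {v : F n} {m : ℕ} (h : v ∈ geod ξ ζ)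
    (hv : wlen v < m) : ray ξ m ≠ ray ζ m := by
  intro heq
  apply h
  rw [rayDir_eq_of_lt hv, rayDir_eq_of_lt hv, heq]

lemma seg_subset_geod {ξ ζ : Boundary n} {v w : F n} (hv : v ∈ geod ξ ζ) (hw : w ∈ geod ξ ζ) :
    seg v w ⊆ geod ξ ζ := by
  intro u hu
  obtain ⟨m, hvm, hwm, hum⟩ : ∃ m, wlen v < m ∧ wlen w < m ∧ wlen u < m :=
    ⟨wlen v + wlen w + wlen u + 1, by lia, by lia, by lia⟩
  have hne := ray_ne_of_mem_geod hv hvm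
  rw [mem_geod_iff_mem_seg hvm.le hne] at hv
  rw [mem_geod_iff_mem_seg hwm.le hne] at hw
  rw [mem_geod_iff_mem_seg hum.le hne]
  exact seg_subset_seg_of_mem hv hw hu

/-! ### Limit sets and minimal subtrees -/

lemma exists_mem_dir_eq_rayDir {B : Subgroup (F n)} {ξ : Boundary n} (hξ : ξ ∈ limitSet B)
    (v : F n) : ∃ a ∈ B, v⁻¹ * a * v ≠ 1 ∧ firstLetter (v⁻¹ * a * v) = rayDir v ξ := by
  obtain ⟨a, ha, hseg⟩ := mem_limitSet_iff.1 hξ (2 * wlen v + 1)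
  have hlen := dist'_triangle 1 v a
  have hray := wlen_ray ξ (2 * wlen v + 1)
  have hdir : dir v a = rayDir v ξ := by
    rw [rayDir_eq_of_lt (show wlen v < 2 * wlen v + 1 by lia)]
    exact dir_eq_dir_of_mem_seg_one (by lia) (by rintro h; rw [← h] at hray; lia) hseg
  rw [seg, Set.mem_ofPred_eq, dist'_one_left, hray] at hseg
  have hlong : wlen v < wlen (v⁻¹ * a) := by
    rw [dist'_one_left v] at hlen
    change wlen v < dist' v a
    lia
  refine ⟨a, ha, ?_, ?_⟩
  · intro h
    rw [eq_inv_of_mul_eq_one_left h, wlen_inv] at hlong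
    exact hlong.false
  · rw [firstLetter_mul_of_wlen_lt hlong]
    exact hdir

lemma geod_subset_treeVerts {B : Subgroup (F n)} {ξ ζ : Boundary n} (hξ : ξ ∈ limitSet B)
    (hζ : ζ ∈ limitSet B) : geod ξ ζ ⊆ treeVerts B := by
  intro v hv
  obtain ⟨a, ha, ha1, hav⟩ := exists_mem_dir_eq_rayDir hξ v
  obtain ⟨b, hb, hb1, hbv⟩ := exists_mem_dir_eq_rayDir hζ v
  have hconj : ∀ {x}, x ∈ B → v⁻¹ * x * v ∈ conjSub v⁻¹ B := fun {x} hx =>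
    mem_conjSub.2 (by convert hx using 1; group)
  rw [← mul_mem_treeVerts_conjSub (g := v⁻¹), inv_mul_cancel]
  exact one_mem_treeVerts_of_firstLetter_ne (hconj ha) (hconj hb) ha1 hb1 (by rwa [hav, hbv])

/- Far powers of an element of `B` whose axis passes through `h`, taken in the right direction,
start with `h`. -/
lemma exists_mem_seg_one {B : Subgroup (F n)} {h : F n} (hh : h ∈ treeVerts B) :
    ∃ a ∈ B, h ∈ seg 1 a := by
  rw [← mul_mem_treeVerts_conjSub (g := h⁻¹), inv_mul_cancel, one_mem_treeVerts_iff] at hh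
  obtain ⟨c, hc, hdir⟩ : ∃ c ∈ conjSub h⁻¹ B, firstLetter c ≠ firstLetter c⁻¹ ∧
      firstLetter h⁻¹ ≠ firstLetter c := by
    obtain ⟨c, hc, hne⟩ := hh
    rcases ne_or_eq (firstLetter h⁻¹) (firstLetter c) with hhc | hhc
    · exact ⟨c, hc, hne, hhc⟩
    · exact ⟨c⁻¹, inv_mem hc, by rw [inv_inv]; exact hne.symm, hhc ▸ hne⟩
  have hc1 : wlen c ≠ 0 := by
    rw [ne_eq, wlen_eq_zero]
    rintro rfl
    simp at hdir
  have hpow : firstLetter (c ^ (wlen h + 1) * h⁻¹) = firstLetter c := by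
    rw [firstLetter_mul_of_wlen_lt, firstLetter_pow hdir.1 (Nat.succ_ne_zero _)]
    rw [wlen_pow hdir.1, wlen_inv]
    nlinarith [Nat.one_le_iff_ne_zero.2 hc1]
  refine ⟨h * c ^ (wlen h + 1) * h⁻¹, ?_, mem_seg_of_dir_ne ?_⟩
  · have := pow_mem hc (wlen h + 1)
    rwa [mem_conjSub, inv_inv] at this
  · rw [dir, dir, mul_one, mul_assoc, inv_mul_cancel_left, hpow]
    exact hdir.2

lemma mem_limitSet_of_ray_mem {B : Subgroup (F n)} {ξ : Boundary n} {m₀ : ℕ}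
    (h : ∀ m ≥ m₀, ray ξ m ∈ treeVerts B) : ξ ∈ limitSet B := by
  refine mem_limitSet_iff.2 fun m => ?_
  obtain ⟨a, ha, hseg⟩ := exists_mem_seg_one (h (max m m₀) (le_max_right _ _))
  exact ⟨a, ha, seg_subset_seg_of_mem (left_mem_seg _ _) hseg
    (ray_mem_seg_one ξ (le_max_left _ _))⟩

end Rays

/-! ### Labels outside the subgroup system -/

section Labels

variable {n r : ℕ} {A : Fin r → Subgroup (F n)} {L : ℕ}

lemma pathIn_iff {w : F n} {S : Set (F n)} : pathIn w S ↔ seg 1 w ⊆ S := by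
  constructor
  · intro h v hv
    rw [← rword_prefix_iff_mem_seg] at hv
    have hmem := h (wlen v) hv.length_le
    rwa [wlen, ← List.prefix_iff_eq_take.1 hv, mk_rword] at hmem
  · intro h m _
    refine h (rword_prefix_iff_mem_seg.1 ?_)
    have htake : (rword w).take m <+: rword w := List.take_prefix m (rword w)
    rwa [rword_mk ((isReduced_rword w).infix htake.isInfix)]

lemma seg_subset_treeVerts_conjSub {g x y : F n} {B : Subgroup (F n)} :
    seg (g * x) (g * y) ⊆ treeVerts (conjSub g B) ↔ seg x y ⊆ treeVerts B :=
  ((Equiv.mulLeft g).forall_congr fun _ =>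
    imp_congr mem_seg_mul_left.symm mul_mem_treeVerts_conjSub.symm).symm

lemma inSystem_conjSub {B : Subgroup (F n)} (hB : InSystem A B) (g : F n) :
    InSystem A (conjSub g B) := by
  obtain ⟨i, h, rfl⟩ := hB
  exact ⟨i, g * h, conjSub_conjSub g h (A i)⟩

lemma mem_Ccal_iff {P Q : F n} : P⁻¹ * Q ∈ Ccal A L ↔
    dist' P Q = L + 2 ∧ ∀ B, InSystem A B → ¬ seg P Q ⊆ treeVerts B := by
  refine and_congr_right fun _ => ⟨?_, ?_⟩
  · rintro h _ hB hsub
    rw [← seg_subset_treeVerts_conjSub (g := P⁻¹), inv_mul_cancel] at hsub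
    obtain ⟨i, g, hg⟩ := inSystem_conjSub hB P⁻¹
    exact h i _ ⟨⟨g, hg⟩, hsub (left_mem_seg _ _)⟩ (pathIn_iff.2 hsub)
  · rintro h i _ ⟨⟨g, rfl⟩, -⟩ hpath
    refine h _ (inSystem_conjSub ⟨i, g, rfl⟩ P) ?_
    have hsub := seg_subset_treeVerts_conjSub (g := P).2 (pathIn_iff.1 hpath)
    rwa [mul_one, mul_inv_cancel_left] at hsub

lemma Ccal_inv {P Q : F n} (h : P⁻¹ * Q ∈ Ccal A L) : Q⁻¹ * P ∈ Ccal A L := by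
  rw [mem_Ccal_iff] at h ⊢
  rwa [seg_symm, dist'_comm]

lemma mem_FmA_of_mem_Ccal {v w x : F n} (hv : v ∈ seg 1 x) (hw : w ∈ seg 1 x)
    (h : v⁻¹ * w ∈ Ccal A L) : x ∈ FmA A L := by
  wlog hle : dist' 1 v ≤ dist' 1 w generalizing v w
  · exact this hw hv (Ccal_inv h) (le_of_not_ge hle)
  have hvw := rword_of_mem_seg (mem_seg_of_dist'_le hv hw hle)
  have hwx := rword_of_mem_seg hw
  rw [inv_one, one_mul, one_mul] at hvw hwx
  exact ⟨_, h, rword v, rword (w⁻¹ * x), by rw [hwx, hvw]⟩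

lemma exists_mem_Ccal_of_mem_FmA {x : F n} (h : x ∈ FmA A L) :
    ∃ v ∈ seg 1 x, ∃ w ∈ seg 1 x, v⁻¹ * w ∈ Ccal A L := by
  obtain ⟨c, hc, s, t, hst⟩ := h
  have hsc : s ++ rword c <+: rword x := ⟨t, hst⟩
  have hs : s <+: rword x := (List.prefix_append s (rword c)).trans hsc
  have hmul : FreeGroup.mk s * c = FreeGroup.mk (s ++ rword c) := by
    rw [← FreeGroup.mul_mk, mk_rword]
  refine ⟨FreeGroup.mk s, rword_prefix_iff_mem_seg.1 ?_, FreeGroup.mk s * c,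
    rword_prefix_iff_mem_seg.1 ?_, by rwa [inv_mul_cancel_left]⟩
  · rwa [rword_mk ((isReduced_rword x).infix hs.isInfix)]
  · rwa [hmul, rword_mk ((isReduced_rword x).infix hsc.isInfix)]

lemma mem_FmA_iff {P Q : F n} : P⁻¹ * Q ∈ FmA A L ↔
    ∃ v ∈ seg P Q, ∃ w ∈ seg P Q, v⁻¹ * w ∈ Ccal A L := by
  constructor
  · intro h
    obtain ⟨v, hv, w, hw, hvw⟩ := exists_mem_Ccal_of_mem_FmA h
    rw [← inv_mul_cancel P, ← mem_seg_mul_left (g := P), mul_inv_cancel_left,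
      mul_inv_cancel_left] at hv hw
    exact ⟨P * v, hv, P * w, hw, by rwa [mul_inv_rev, mul_assoc, inv_mul_cancel_left]⟩
  · rintro ⟨v, hv, w, hw, hvw⟩
    rw [← mem_seg_mul_left (g := P⁻¹), inv_mul_cancel] at hv hw
    exact mem_FmA_of_mem_Ccal hv hw (by rwa [mul_inv_rev, mul_assoc, inv_inv, mul_inv_cancel_left])

lemma FmA_symm {P Q : F n} (h : P⁻¹ * Q ∈ FmA A L) : Q⁻¹ * P ∈ FmA A L := by
  rw [mem_FmA_iff] at h ⊢
  rwa [seg_symm]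

lemma FmA_of_mem_seg {x y P Q : F n} (hP : P ∈ seg x y) (hQ : Q ∈ seg x y)
    (h : P⁻¹ * Q ∈ FmA A L) : x⁻¹ * y ∈ FmA A L := by
  obtain ⟨v, hv, w, hw, hvw⟩ := mem_FmA_iff.1 h
  have hsub := seg_subset_seg_of_mem hP hQ
  exact mem_FmA_iff.2 ⟨v, hsub hv, w, hsub hw, hvw⟩

lemma not_seg_subset_treeVerts {P Q : F n} (h : P⁻¹ * Q ∈ FmA A L) {B : Subgroup (F n)}
    (hB : InSystem A B) : ¬ seg P Q ⊆ treeVerts B := by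
  intro hsub
  obtain ⟨v, hv, w, hw, hvw⟩ := mem_FmA_iff.1 h
  exact (mem_Ccal_iff.1 hvw).2 B hB ((seg_subset_seg_of_mem hv hw).trans hsub)

lemma ne_of_mem_FmA {P Q : F n} (h : P⁻¹ * Q ∈ FmA A L) : P ≠ Q := by
  rintro rfl
  obtain ⟨v, hv, w, hw, hvw⟩ := mem_FmA_iff.1 h
  have hlen := (mem_Ccal_iff.1 hvw).1
  have := dist'_triangle v P w
  have := dist'_comm v P
  rw [seg, Set.mem_ofPred_eq, dist'_eq_zero.2 rfl] at hv hw
  lia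

lemma eq_of_lt_dist' (hdiam : DiamBound A L) {B B' : Subgroup (F n)} (hB : InSystem A B)
    (hB' : InSystem A B') {x y : F n} (hx : x ∈ treeVerts B ∩ treeVerts B')
    (hy : y ∈ treeVerts B ∩ treeVerts B') (h : L < dist' x y) : B = B' := by
  by_contra hne
  exact (hdiam B B' hB hB' hne x hx y hy).not_gt h

/- By induction, the geodesic without its first edge and the geodesic without its last edge each
stay in a tree; as they overlap in more than `L` edges, these trees agree. -/
lemma exists_seg_subset_treeVerts (hdiam : DiamBound A L) {P Q : F n} (hPQ : L + 2 ≤ dist' P Q)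
    (h : P⁻¹ * Q ∉ FmA A L) : ∃ B, InSystem A B ∧ seg P Q ⊆ treeVerts B := by
  obtain ⟨k, hk⟩ : ∃ k, dist' P Q = k := ⟨_, rfl⟩
  rw [hk] at hPQ
  induction k, hPQ using Nat.le_induction generalizing P Q with
  | base =>
    have hC : P⁻¹ * Q ∉ Ccal A L := fun hC =>
      h (mem_FmA_iff.2 ⟨P, left_mem_seg P Q, Q, right_mem_seg P Q, hC⟩)
    rw [mem_Ccal_iff] at hC
    push Not at hC
    exact hC hk
  | succ k hLk ih =>
    have hne : P ≠ Q := by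
      rintro rfl
      rw [dist'_eq_zero.2 rfl] at hk
      lia
    obtain ⟨Q', hQ', hQ'Q, hinsQ⟩ := exists_seg_subset_insert hne
    obtain ⟨P', hP', hP'P, hinsP⟩ := exists_seg_subset_insert hne.symm
    have hcut := hP'
    rw [seg, Set.mem_ofPred_eq, dist'_comm Q P, hP'P, dist'_comm Q P'] at hcut
    rw [seg_symm] at hP' hinsP
    have hQ'len := hQ'
    rw [seg, Set.mem_ofPred_eq] at hQ'len
    obtain ⟨B, hB, hPB⟩ := ih (P := P) (Q := Q')
      (mt (FmA_of_mem_seg (left_mem_seg P Q) hQ') h) (by lia)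
    obtain ⟨B', hB', hQB'⟩ := ih (P := P') (Q := Q)
      (mt (FmA_of_mem_seg hP' (right_mem_seg P Q)) h) (by lia)
    have hP'B : P' ∈ treeVerts B := hPB ((hinsQ hP').resolve_left (by
      rintro rfl; rw [dist'_eq_zero.2 rfl] at hcut; lia))
    have hQ'B' : Q' ∈ treeVerts B' := hQB' (seg_symm Q P' ▸ (hinsP hQ').resolve_left (by
      rintro rfl; rw [dist'_eq_zero.2 rfl] at hQ'len; lia))
    have hlong : L < dist' P' Q' := by
      have := dist'_triangle P' Q' Q
      lia
    obtain rfl := eq_of_lt_dist' hdiam hB hB' ⟨hP'B, hQB' (left_mem_seg _ _)⟩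
      ⟨hPB (right_mem_seg _ _), hQ'B'⟩ hlong
    exact ⟨B, hB, hinsQ.trans (Set.insert_subset (hQB' (right_mem_seg _ _)) hPB)⟩

lemma ray_mem_seg_ray {ξ ζ : Boundary n} {m k : ℕ} (hne : ray ξ m ≠ ray ζ m) (hk : m ≤ k) :
    ray ξ m ∈ seg (ray ξ k) (ray ζ k) := by
  rw [← mem_geod_iff_mem_seg (by rwa [wlen_ray]) (ray_ne_of_le hk hne)]
  exact ray_mem_geod hne

lemma sub_le_dist'_ray {ξ ζ : Boundary n} {m k : ℕ} (hne : ray ξ m ≠ ray ζ m) (hk : m ≤ k) :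
    k - m ≤ dist' (ray ξ k) (ray ζ k) := by
  have hseg := ray_mem_seg_ray hne hk
  have htri := dist'_triangle 1 (ray ξ m) (ray ξ k)
  rw [dist'_one_left, dist'_one_left, wlen_ray, wlen_ray] at htri
  rw [seg, Set.mem_ofPred_eq, dist'_comm] at hseg
  lia

lemma FmA_ray_mono {ξ ζ : Boundary n} {m k : ℕ} (h : (ray ξ m)⁻¹ * ray ζ m ∈ FmA A L)
    (hk : m ≤ k) : (ray ξ k)⁻¹ * ray ζ k ∈ FmA A L := by
  have hne := ne_of_mem_FmA h
  refine FmA_of_mem_seg (ray_mem_seg_ray hne hk) ?_ h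
  rw [seg_symm]
  exact ray_mem_seg_ray hne.symm hk

lemma mk_mem_relSet_iff {ξ ζ : Boundary n} : s(ξ, ζ) ∈ relSet A ↔
    ξ ≠ ζ ∧ ∀ B, InSystem A B → ¬ (ξ ∈ limitSet B ∧ ζ ∈ limitSet B) := by
  refine and_congr Sym2.mk_isDiag_iff.not ⟨?_, ?_⟩
  · rintro h _ ⟨i, g, rfl⟩ ⟨hξ, hζ⟩
    exact h ⟨i, g, ξ, ζ, rfl, hξ, hζ⟩
  · rintro h ⟨i, g, ξ', ζ', heq, hξ, hζ⟩
    rcases Sym2.eq_iff.1 heq with ⟨rfl, rfl⟩ | ⟨rfl, rfl⟩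
    · exact h _ ⟨i, g, rfl⟩ ⟨hξ, hζ⟩
    · exact h _ ⟨i, g, rfl⟩ ⟨hζ, hξ⟩

lemma exists_ray_mem_FmA (hdiam : DiamBound A L) {ξ ζ : Boundary n} (h : s(ξ, ζ) ∈ relSet A) :
    ∃ m, (ray ξ m)⁻¹ * ray ζ m ∈ FmA A L := by
  rw [mk_mem_relSet_iff] at h
  obtain ⟨m₀, hm₀⟩ := exists_ray_ne h.1
  by_contra! hbad
  have htree : ∀ m ≥ m₀ + (L + 2), L + 2 ≤ dist' (ray ξ m) (ray ζ m) ∧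
      ∃ B, InSystem A B ∧ seg (ray ξ m) (ray ζ m) ⊆ treeVerts B := fun m hm => by
    have hlong : L + 2 ≤ dist' (ray ξ m) (ray ζ m) := by
      have := sub_le_dist'_ray hm₀ (by lia : m₀ ≤ m)
      lia
    exact ⟨hlong, exists_seg_subset_treeVerts hdiam hlong (hbad m)⟩
  set m₁ := m₀ + (L + 2)
  have hne : ray ξ m₁ ≠ ray ζ m₁ := ray_ne_of_le (by lia) hm₀
  obtain ⟨hlong, B, hB, hsub⟩ := htree m₁ le_rfl
  have hall : ∀ m ≥ m₁, seg (ray ξ m) (ray ζ m) ⊆ treeVerts B := fun m hm => by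
    obtain ⟨-, B', hB', hsub'⟩ := htree m hm
    obtain rfl : B' = B := eq_of_lt_dist' hdiam hB' hB
      ⟨hsub' (ray_mem_seg_ray hne hm), hsub (left_mem_seg _ _)⟩
      ⟨hsub' (seg_symm _ _ ▸ ray_mem_seg_ray hne.symm hm), hsub (right_mem_seg _ _)⟩ (by lia)
    exact hsub'
  exact h.2 B hB ⟨mem_limitSet_of_ray_mem fun m hm => hall m hm (left_mem_seg _ _),
    mem_limitSet_of_ray_mem fun m hm => hall m hm (right_mem_seg _ _)⟩

end Labels

/-! ### Boxes in the double boundary -/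

section Boxes

variable {n r L : ℕ} {A : Fin r → Subgroup (F n)}

/-- The box of `P` and `Q`: the bi-infinite geodesics passing through both `P` and `Q`. It is the
translate by `P` of the cylinder of `P⁻¹ * Q`. -/
def box (P Q : F n) : Set (Sym2 (Boundary n)) :=
  Sym2.fromRel (r := fun ξ ζ => P ∈ geod ξ ζ ∧ Q ∈ geod ξ ζ)
    ⟨fun ξ ζ h => by rwa [geod_symm ζ ξ]⟩

/-- The part in `∂²(F_n,𝒜)` of the box of `P` and `Q`. -/
def relBox (A : Fin r → Subgroup (F n)) (P Q : F n) : Set ↥(relSet A) :=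
  Subtype.val ⁻¹' box P Q

/-- The `m`-th trace of `{ξ, ζ}`: the pair of vertices of the rays to `ξ` and `ζ` at distance `m`
from `1`. -/
def trace (m : ℕ) : Sym2 (Boundary n) → Sym2 (F n) := Sym2.map fun ξ => ray ξ m

lemma mk_mem_box {P Q : F n} {ξ ζ : Boundary n} :
    s(ξ, ζ) ∈ box P Q ↔ P ∈ geod ξ ζ ∧ Q ∈ geod ξ ζ := Iff.rfl

lemma mk_mem_box_of_ne {P Q : F n} (hPQ : P ≠ Q) {m : ℕ} (hP : wlen P ≤ m) (hQ : wlen Q ≤ m)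
    {ξ ζ : Boundary n} : s(ξ, ζ) ∈ box P Q ↔
      P ∈ seg (ray ξ m) (ray ζ m) ∧ Q ∈ seg (ray ξ m) (ray ζ m) := by
  rw [mk_mem_box]
  by_cases h : ray ξ m = ray ζ m
  · have hgeod : ∀ v ∈ geod ξ ζ, wlen v ≤ m → v = ray ζ m := fun v hv hvm => by
      by_contra hne
      exact hv ((rayDir_eq hvm (h ▸ hne)).trans (h ▸ (rayDir_eq hvm hne).symm))
    have hseg : ∀ v ∈ seg (ray ζ m) (ray ζ m), ray ζ m = v := fun v hv => by
      rw [seg, Set.mem_ofPred_eq, dist'_eq_zero.2 rfl] at hv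
      exact dist'_eq_zero.1 (Nat.eq_zero_of_add_eq_zero_right hv)
    rw [h]
    refine iff_of_false ?_ ?_
    · exact fun ⟨h1, h2⟩ => hPQ ((hgeod P h1 hP).trans (hgeod Q h2 hQ).symm)
    · exact fun ⟨h1, h2⟩ => hPQ ((hseg P h1).symm.trans (hseg Q h2))
  · rw [mem_geod_iff_mem_seg hP h, mem_geod_iff_mem_seg hQ h]

lemma mem_seg_iff_of_wlen_eq {p q v : F n} (hp : wlen p = wlen v) (hq : wlen q = wlen v) :
    v ∈ seg p q ↔ v = p ∨ v = q := by
  refine ⟨fun h => ?_, ?_⟩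
  · by_contra! hne
    refine (mem_seg_iff_dir_ne_of_ne hne.1).1 h ?_
    exact (dir_eq_dir_one hne.1 hp.le).trans (dir_eq_dir_one hne.2 hq.le).symm
  · rintro (rfl | rfl)
    exacts [left_mem_seg _ _, right_mem_seg _ _]

lemma mem_box_iff_trace {P Q : F n} (hPQ : P ≠ Q) (h : wlen P = wlen Q)
    {z : Sym2 (Boundary n)} : z ∈ box P Q ↔ trace (wlen P) z = s(P, Q) := by
  induction z with
  | _ ξ ζ =>
    rw [mk_mem_box_of_ne hPQ le_rfl h.ge,
      mem_seg_iff_of_wlen_eq (wlen_ray _ _) (wlen_ray _ _),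
      mem_seg_iff_of_wlen_eq ((wlen_ray _ _).trans h) ((wlen_ray _ _).trans h),
      trace, Sym2.map_mk, Sym2.eq_iff]
    grind

lemma trace_eq_of_le {m k : ℕ} (hkm : k ≤ m) {z z' : Sym2 (Boundary n)}
    (h : trace m z = trace m z') : trace k z = trace k z' := by
  have hcut : ∀ z : Sym2 (Boundary n),
      trace k z = Sym2.map (fun p => FreeGroup.mk ((rword p).take k)) (trace m z) := fun z => by
    rw [trace, trace, Sym2.map_map]
    congr! 2 with ξ
    rw [Function.comp_apply, rword_ray, bpre, ← List.map_take, List.take_range, min_eq_left hkm]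
    rfl
  rw [hcut, hcut, h]

lemma trace_injective : Function.Injective fun (z : Sym2 (Boundary n)) m => trace m z := by
  intro z z' h
  induction z with
  | _ ξ ζ =>
    induction z' with
    | _ ξ' ζ' =>
      have hsep : ∀ {α β γ δ : Boundary n}, ¬ (α = γ ∧ β = δ) →
          ∃ m, ∀ k ≥ m, ¬ (ray α k = ray γ k ∧ ray β k = ray δ k) := fun {α β γ δ} hne => by
        rcases not_and_or.1 hne with h1 | h1
        all_goals
          obtain ⟨m, hm⟩ := exists_ray_ne h1
          exact ⟨m, fun k hk => by simp [ray_ne_of_le hk hm]⟩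
      by_contra hne
      rw [Sym2.eq_iff, not_or] at hne
      obtain ⟨m₁, h₁⟩ := hsep hne.1
      obtain ⟨m₂, h₂⟩ := hsep hne.2
      rcases Sym2.eq_iff.1 (congrFun h (max m₁ m₂)) with heq | heq
      · exact h₁ _ (le_max_left _ _) heq
      · exact h₂ _ (le_max_right _ _) heq

lemma box_subset_relSet {P Q : F n} (h : P⁻¹ * Q ∈ FmA A L) : box P Q ⊆ relSet A := by
  intro z hz
  induction z with
  | _ ξ ζ =>
    rw [mk_mem_relSet_iff]
    refine ⟨?_, fun B hB hlim => not_seg_subset_treeVerts h hB ?_⟩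
    · rintro rfl
      exact hz.1 rfl
    · exact (seg_subset_geod hz.1 hz.2).trans (geod_subset_treeVerts hlim.1 hlim.2)

lemma exists_mem_box (hdiam : DiamBound A L) {z : Sym2 (Boundary n)} (hz : z ∈ relSet A) :
    ∃ m₀, ∀ m ≥ m₀, ∃ P Q : F n, wlen P = m ∧ wlen Q = m ∧ P⁻¹ * Q ∈ FmA A L ∧ z ∈ box P Q := by
  induction z with
  | _ ξ ζ =>
    obtain ⟨m₀, hm₀⟩ := exists_ray_mem_FmA hdiam hz
    refine ⟨m₀, fun m hm => ?_⟩
    have hgood := FmA_ray_mono hm₀ hm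
    have hne := ne_of_mem_FmA hgood
    exact ⟨_, _, wlen_ray _ _, wlen_ray _ _, hgood, ray_mem_geod hne,
      geod_symm ζ ξ ▸ ray_mem_geod hne.symm⟩

lemma mk_mem_cylinder {w : F n} {ξ ζ : Boundary n} : s(ξ, ζ) ∈ cylinder w ↔
    ξ.1 0 ≠ ζ.1 0 ∧ (ray ξ (wlen w) = w ∨ ray ζ (wlen w) = w) := by
  rw [← wordPrefixOf_iff, ← wordPrefixOf_iff]
  refine ⟨?_, fun h => ⟨ξ, ζ, rfl, h⟩⟩
  rintro ⟨ξ', ζ', heq, h0, h⟩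
  rcases Sym2.eq_iff.1 heq with ⟨rfl, rfl⟩ | ⟨rfl, rfl⟩
  exacts [⟨h0, h⟩, ⟨h0.symm, h.symm⟩]

lemma one_mem_geod {ξ ζ : Boundary n} : 1 ∈ geod ξ ζ ↔ ξ.1 0 ≠ ζ.1 0 := by
  have hray : ∀ ξ : Boundary n, rayDir 1 ξ = some (ξ.1 0) := fun ξ => rayDir_ray ξ 0
  rw [geod, Set.mem_ofPred_eq, hray, hray, ne_eq, Option.some_inj]

lemma cylinder_eq_box {w : F n} (hw : w ≠ 1) : cylinder w = box 1 w := by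
  ext z
  induction z with
  | _ ξ ζ =>
    rw [mk_mem_cylinder, mk_mem_box, one_mem_geod]
    refine and_congr_right fun h0 => ?_
    have hpos : wlen (1 : F n) < wlen w := by
      rw [wlen_one, Nat.pos_iff_ne_zero]
      exact mt wlen_eq_zero.1 hw
    rw [mem_geod_iff_mem_seg le_rfl (ray_ne_of_mem_geod (one_mem_geod.2 h0) hpos),
      mem_seg_iff_of_wlen_eq (wlen_ray _ _) (wlen_ray _ _), eq_comm, eq_comm (b := w)]

end Boxes

/-! ### The action on the double boundary -/

section Action

variable {n r L : ℕ} {A : Fin r → Subgroup (F n)}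

lemma cancelLen_spec (l : List (Letter n)) (ξ : ℕ → Letter n) :
    cancelLen l ξ ≤ l.length ∧ (∀ i < cancelLen l ξ, l.reverse[i]? = some (linv (ξ i))) ∧
      l.reverse[cancelLen l ξ]? ≠ some (linv (ξ (cancelLen l ξ))) := by
  have hbdd : BddAbove {j | j ≤ l.length ∧ ∀ i < j, l.reverse[i]? = some (linv (ξ i))} :=
    ⟨l.length, fun j hj => hj.1⟩
  have hne : {j | j ≤ l.length ∧ ∀ i < j, l.reverse[i]? = some (linv (ξ i))}.Nonempty :=
    ⟨0, Nat.zero_le _, fun i hi => absurd hi i.not_lt_zero⟩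
  obtain ⟨hle, hcancel⟩ := Nat.sSup_mem hne hbdd
  refine ⟨hle, hcancel, fun h => ?_⟩
  have hlt : cancelLen l ξ < l.reverse.length := List.getElem?_eq_some_iff.1 h |>.1
  rw [List.length_reverse] at hlt
  refine Nat.not_succ_le_self _ (le_csSup hbdd ⟨hlt, fun i hi => ?_⟩)
  rcases Nat.lt_succ_iff_lt_or_eq.1 hi with hi | rfl
  exacts [hcancel i hi, h]

lemma actSeq_of_lt {g : F n} {ξ : ℕ → Letter n} {i : ℕ} (hi : i < wlen g - cancelLen (rword g) ξ) :
    actSeq g ξ i = (rword g)[i]'(hi.trans_le (Nat.sub_le _ _)) :=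
  dif_pos hi

lemma actSeq_add (g : F n) (ξ : ℕ → Letter n) (m : ℕ) :
    actSeq g ξ (wlen g - cancelLen (rword g) ξ + m) = ξ (cancelLen (rword g) ξ + m) := by
  rw [actSeq, dif_neg (by rw [wlen]; lia), wlen, Nat.add_sub_cancel_left, add_comm]

lemma isRed_actSeq (g : F n) (ξ : Boundary n) : IsRed (actSeq g ξ.1) := by
  obtain ⟨hle, -, hmax⟩ := cancelLen_spec (rword g) ξ.1
  intro i
  rcases lt_trichotomy (i + 1) (wlen g - cancelLen (rword g) ξ.1) with hi | hi | hi
  · rw [actSeq_of_lt hi, actSeq_of_lt (i.lt_succ_self.trans hi), ← fst_imp_snd_iff_ne_linv]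
    exact List.isChain_iff_getElem.1 (isReduced_rword g) i _
  · have hadd := actSeq_add g ξ.1 0
    rw [add_zero, add_zero, ← hi] at hadd
    rw [hadd, actSeq_of_lt (by lia)]
    rintro h
    refine hmax ?_
    rw [h, linv_linv, List.getElem?_reverse (by rw [wlen] at hi; lia), List.getElem?_eq_some_iff]
    exact ⟨by rw [wlen] at hi; lia, by congr 1; rw [wlen] at hi; lia⟩
  · obtain ⟨m, rfl⟩ := Nat.exists_eq_add_of_le (Nat.le_of_lt_succ hi)
    rw [add_assoc, actSeq_add, actSeq_add]
    exact ξ.2 _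

lemma bAct_val (g : F n) (ξ : Boundary n) : (bAct g ξ).1 = actSeq g ξ.1 :=
  congrArg Subtype.val (dif_pos (isRed_actSeq g ξ))

lemma ray_bAct_cancel (g : F n) (ξ : Boundary n) :
    ray (bAct g ξ) (wlen g - cancelLen (rword g) ξ.1) = g * ray ξ (cancelLen (rword g) ξ.1) := by
  obtain ⟨hle, hcancel, -⟩ := cancelLen_spec (rword g) ξ.1
  set c := cancelLen (rword g) ξ.1
  have htake : bpre (bAct g ξ) (wlen g - c) = (rword g).take (wlen g - c) := by
    refine List.ext_getElem (by simp [bpre, wlen]) fun i hi _ => ?_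
    have hi' : i < wlen g - c := by simpa [bpre] using hi
    simp only [bpre, List.getElem_map, List.getElem_range, List.getElem_take, bAct_val]
    exact actSeq_of_lt hi'
  have hdrop : (rword g).drop (wlen g - c) = FreeGroup.invRev (bpre ξ c) := by
    rw [← List.reverse_inj, List.reverse_drop, FreeGroup.invRev, List.reverse_reverse]
    refine List.ext_getElem (by simp [bpre, wlen]; lia) fun i hi hi' => ?_
    have hic : i < c := by simpa [bpre] using hi'
    have := hcancel i hic
    rw [List.getElem?_eq_some_iff] at this
    obtain ⟨_, h⟩ := this
    simp only [List.getElem_take, h, bpre, List.getElem_map, List.getElem_range]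
    rfl
  have hg : g = FreeGroup.mk ((rword g).take (wlen g - c)) * (ray ξ c)⁻¹ := by
    rw [ray, FreeGroup.inv_mk, ← hdrop, FreeGroup.mul_mk, List.take_append_drop, mk_rword]
  rw [ray, htake, eq_mul_inv_iff_mul_eq.1 hg]

lemma ray_bAct (g : F n) (ξ : Boundary n) (m : ℕ) :
    ray (bAct g ξ) (wlen g - cancelLen (rword g) ξ.1 + m) =
      g * ray ξ (cancelLen (rword g) ξ.1 + m) := by
  induction m with
  | zero => exact ray_bAct_cancel g ξ
  | succ m ih =>
    rw [← add_assoc, ← add_assoc, ray_succ, ray_succ, ih, bAct_val, actSeq_add, mul_assoc]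

lemma rayDir_bAct (g v : F n) (ξ : Boundary n) : rayDir v (bAct g ξ) = rayDir (g⁻¹ * v) ξ := by
  obtain ⟨m, h, h'⟩ : ∃ m, wlen v < m ∧ wlen (g⁻¹ * v) < m :=
    ⟨wlen v + wlen (g⁻¹ * v) + 1, by lia, by lia⟩
  rw [rayDir_eq_of_lt (h.trans_le (Nat.le_add_left m _)), ray_bAct,
    rayDir_eq_of_lt (h'.trans_le (Nat.le_add_left m _)), ← dir_mul_left g (g⁻¹ * v),
    mul_inv_cancel_left]

lemma dbAct_mem_box {g P Q : F n} {z : Sym2 (Boundary n)} :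
    dbAct g z ∈ box P Q ↔ z ∈ box (g⁻¹ * P) (g⁻¹ * Q) := by
  induction z with
  | _ ξ ζ =>
    rw [dbAct, Sym2.map_mk]
    simp only [mk_mem_box, geod, Set.mem_ofPred_eq, rayDir_bAct]

lemma dbAct_mem_relSet (hdiam : DiamBound A L) (g : F n) {z : Sym2 (Boundary n)}
    (hz : z ∈ relSet A) : dbAct g z ∈ relSet A := by
  obtain ⟨m, hm⟩ := exists_mem_box hdiam hz
  obtain ⟨P, Q, -, -, hgood, hzPQ⟩ := hm m le_rfl
  refine box_subset_relSet (P := g * P) (Q := g * Q) (L := L) ?_ ?_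
  · rwa [mul_inv_rev, mul_assoc, inv_mul_cancel_left]
  · rwa [dbAct_mem_box, inv_mul_cancel_left, inv_mul_cancel_left]

lemma relAct_preimage_relBox (hdiam : DiamBound A L) (g P Q : F n) :
    relAct A g ⁻¹' relBox A P Q = relBox A (g⁻¹ * P) (g⁻¹ * Q) := by
  ext z
  change (relAct A g z).1 ∈ box P Q ↔ z.1 ∈ box (g⁻¹ * P) (g⁻¹ * Q)
  rw [relAct, dif_pos (dbAct_mem_relSet hdiam g z.2), dbAct_mem_box]

end Action

/-! ### Topology of the relative double boundary -/

section Topology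

open TopologicalSpace

variable {n r L : ℕ} {A : Fin r → Subgroup (F n)}

lemma isClosed_isRed : IsClosed {ξ : ℕ → Letter n | IsRed ξ} := by
  simp only [IsRed, Set.ofPred_forall]
  refine isClosed_iInter fun i => ?_
  have hcont : Continuous fun ξ : ℕ → Letter n => (ξ (i + 1), ξ i) := by fun_prop
  exact (isClosed_discrete {p : Letter n × Letter n | p.1 ≠ linv p.2}).preimage hcont

instance : CompactSpace (Boundary n) :=
  isCompact_iff_compactSpace.1 (isClosed_isRed (n := n)).isCompact

instance : CompactSpace (Sym2 (Boundary n)) :=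
  inferInstanceAs (CompactSpace (Quot (Sym2.Rel (Boundary n))))

instance : BorelSpace (Sym2 (Boundary n)) := ⟨rfl⟩

lemma isLocallyConstant_ray (m : ℕ) : IsLocallyConstant fun ξ : Boundary n => ray ξ m := by
  induction m with
  | zero => exact IsLocallyConstant.const 1
  | succ m ih =>
    have hletter : Continuous fun ξ : Boundary n => ξ.1 m :=
      (continuous_apply m).comp continuous_subtype_val
    simp only [ray_succ]
    exact ih.mul ((IsLocallyConstant.of_discrete letterE).comp_continuous hletter)

lemma isLocallyConstant_trace (m : ℕ) :
    IsLocallyConstant (trace m : Sym2 (Boundary n) → Sym2 (F n)) := fun s => by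
  have hpair : IsLocallyConstant fun p : Boundary n × Boundary n => s(ray p.1 m, ray p.2 m) :=
    ((isLocallyConstant_ray m).comp_continuous continuous_fst).comp₂
      ((isLocallyConstant_ray m).comp_continuous continuous_snd) fun p q => s(p, q)
  exact isQuotientMap_quot_mk.isOpen_preimage.1 (hpair s)

instance : T2Space (Sym2 (Boundary n)) :=
  letI : TopologicalSpace (Sym2 (F n)) := ⊥
  haveI : DiscreteTopology (Sym2 (F n)) := ⟨rfl⟩
  .of_injective_continuous trace_injective
    (continuous_pi fun m => (isLocallyConstant_trace m).continuous)

lemma exists_trace_subset {V : Set (Sym2 (Boundary n))} (hV : IsOpen V) {z : Sym2 (Boundary n)}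
    (hz : z ∈ V) : ∃ m, ∀ z', trace m z' = trace m z → z' ∈ V := by
  let : TopologicalSpace (Sym2 (F n)) := ⊥
  have : DiscreteTopology (Sym2 (F n)) := ⟨rfl⟩
  have hcont : Continuous fun (z : Sym2 (Boundary n)) m => trace m z :=
    continuous_pi fun m => (isLocallyConstant_trace m).continuous
  obtain ⟨U, hU, rfl⟩ := (hcont.isClosedEmbedding trace_injective).isInducing.isOpen_iff.1 hV
  obtain ⟨I, u, hu, hsub⟩ := isOpen_pi_iff.1 hU _ hz
  refine ⟨I.sup id, fun z' h => hsub fun m hm => ?_⟩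
  have heq : trace m z' = trace m z := trace_eq_of_le (Finset.le_sup (f := id) hm) h
  exact (congrArg (· ∈ u m) heq).mpr (hu m hm).2

lemma isClopen_box {P Q : F n} (h : P ≠ Q) : IsClopen (box P Q) := by
  let S : Set (Sym2 (F n)) := Sym2.fromRel (r := fun p q => P ∈ seg p q ∧ Q ∈ seg p q)
    ⟨fun p q hpq => by rwa [seg_symm q p]⟩
  have heq : box P Q = trace (max (wlen P) (wlen Q)) ⁻¹' S := by
    ext z
    induction z with
    | _ ξ ζ => exact mk_mem_box_of_ne h (le_max_left _ _) (le_max_right _ _)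
  rw [heq]
  exact ⟨⟨isLocallyConstant_trace _ Sᶜ⟩, isLocallyConstant_trace _ S⟩

lemma isOpen_relBox {P Q : F n} (h : P⁻¹ * Q ∈ FmA A L) : IsOpen (relBox A P Q) :=
  (isClopen_box (ne_of_mem_FmA h)).isOpen.preimage continuous_subtype_val

lemma isCompact_relBox {P Q : F n} (h : P⁻¹ * Q ∈ FmA A L) : IsCompact (relBox A P Q) := by
  rw [Subtype.isCompact_iff, relBox, Subtype.image_preimage_coe,
    Set.inter_eq_self_of_subset_right (box_subset_relSet h)]
  exact (isClopen_box (ne_of_mem_FmA h)).isClosed.isCompact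

/-- The boxes in `∂²(F_n,𝒜)` of the segments labelled in `F_n − 𝒜` with both endpoints on the same
sphere around `1`. Unlike arbitrary boxes, they are nested or disjoint. -/
def boxes (A : Fin r → Subgroup (F n)) (L : ℕ) : Set (Set ↥(relSet A)) :=
  {s | ∃ P Q : F n, wlen P = wlen Q ∧ P⁻¹ * Q ∈ FmA A L ∧ s = relBox A P Q}

lemma countable_boxes : (boxes A L).Countable := by
  have : Countable (F n) := FreeGroup.toWord_injective.countable
  refine (Set.countable_range fun p : F n × F n => relBox A p.1 p.2).mono ?_
  rintro _ ⟨P, Q, -, -, rfl⟩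
  exact ⟨(P, Q), rfl⟩

lemma isTopologicalBasis_boxes (hdiam : DiamBound A L) : IsTopologicalBasis (boxes A L) := by
  refine isTopologicalBasis_of_isOpen_of_nhds ?_ ?_
  · rintro _ ⟨P, Q, -, hPQ, rfl⟩
    exact isOpen_relBox hPQ
  · rintro ⟨z, hz⟩ U hzU hU
    obtain ⟨V, hV, rfl⟩ := isOpen_induced_iff.1 hU
    obtain ⟨m₁, hm₁⟩ := exists_trace_subset hV hzU
    obtain ⟨m₀, hm₀⟩ := exists_mem_box hdiam hz
    obtain ⟨P, Q, hP, hQ, hPQ, hzPQ⟩ := hm₀ (max m₀ m₁) (le_max_left _ _)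
    have hmem : ∀ z, z ∈ box P Q ↔ trace (wlen P) z = s(P, Q) := fun z =>
      mem_box_iff_trace (ne_of_mem_FmA hPQ) (hP.trans hQ.symm)
    refine ⟨_, ⟨P, Q, hP.trans hQ.symm, hPQ, rfl⟩, hzPQ, fun z' hz' => hm₁ _ ?_⟩
    have htrace := ((hmem _).1 hz').trans ((hmem _).1 hzPQ).symm
    exact trace_eq_of_le ((le_max_right _ _).trans hP.ge) htrace

lemma box_subset_box_of_mem {P Q P' Q' : F n} (hPQ : P ≠ Q) (hPQ' : P' ≠ Q') (h : wlen P = wlen Q)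
    (h' : wlen P' = wlen Q') (hle : wlen P ≤ wlen P') {z : Sym2 (Boundary n)}
    (hz : z ∈ box P Q) (hz' : z ∈ box P' Q') : box P' Q' ⊆ box P Q := by
  intro y hy
  rw [mem_box_iff_trace hPQ h] at hz ⊢
  rw [mem_box_iff_trace hPQ' h'] at hz' hy
  rw [← hz, trace_eq_of_le hle (hy.trans hz'.symm)]

lemma isPiSystem_boxes : IsPiSystem (boxes A L) := by
  rintro _ ⟨P, Q, h, hPQ, rfl⟩ _ ⟨P', Q', h', hPQ', rfl⟩ ⟨z, hz, hz'⟩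
  have hne := ne_of_mem_FmA hPQ
  have hne' := ne_of_mem_FmA hPQ'
  rcases le_total (wlen P) (wlen P') with hle | hle
  · exact ⟨P', Q', h', hPQ', Set.inter_eq_self_of_subset_right <|
      Set.preimage_mono <| box_subset_box_of_mem hne hne' h h' hle hz hz'⟩
  · exact ⟨P, Q, h, hPQ, Set.inter_eq_self_of_subset_left <|
      Set.preimage_mono <| box_subset_box_of_mem hne' hne h' h hle hz' hz⟩

lemma generateFrom_boxes (hdiam : DiamBound A L) :
    (inferInstance : MeasurableSpace ↥(relSet A)) = .generateFrom (boxes A L) := by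
  have hbasis := isTopologicalBasis_boxes hdiam
  have := hbasis.secondCountableTopology countable_boxes
  rw [← hbasis.borel_eq_generateFrom]
  exact BorelSpace.measurable_eq

lemma measure_ext_boxes (hdiam : DiamBound A L) {μ ν : Measure ↥(relSet A)}
    (hfin : ∀ s ∈ boxes A L, μ s ≠ ⊤) (h : ∀ s ∈ boxes A L, μ s = ν s) : μ = ν :=
  Measure.ext_of_generateFrom_of_cover_subset (generateFrom_boxes hdiam) isPiSystem_boxes
    subset_rfl countable_boxes (isTopologicalBasis_boxes hdiam).sUnion_eq hfin h

lemma measurable_relAct (hdiam : DiamBound A L) (g : F n) : Measurable (relAct A g) := by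
  have h : @Measurable _ _ _ (.generateFrom (boxes A L)) (relAct A g) := by
    refine measurable_generateFrom ?_
    rintro _ ⟨P, Q, -, hPQ, rfl⟩
    rw [relAct_preimage_relBox hdiam]
    refine (isOpen_relBox (L := L) ?_).measurableSet
    rwa [mul_inv_rev, inv_inv, mul_assoc, mul_inv_cancel_left]
  rwa [← generateFrom_boxes hdiam] at h

lemma measure_relBox (hdiam : DiamBound A L) {μ : Measure ↥(relSet A)}
    (hμ : ∀ (g : F n) (s : Set ↥(relSet A)), MeasurableSet s → μ (relAct A g ⁻¹' s) = μ s)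
    {P Q : F n} (h : P⁻¹ * Q ∈ FmA A L) : μ (relBox A P Q) = μ (relCyl A (P⁻¹ * Q)) := by
  have hne : P⁻¹ * Q ≠ 1 := fun h1 => ne_of_mem_FmA h (inv_mul_eq_one.1 h1)
  rw [← hμ P _ (isOpen_relBox h).measurableSet, relAct_preimage_relBox hdiam, inv_mul_cancel,
    relCyl, cylinder_eq_box hne, relBox]

end Topology

/-! ### Masses of spheres -/

section Sphere

variable {n r L : ℕ} {A : Fin r → Subgroup (F n)}

lemma finite_wlen_eq (n M : ℕ) : {p : F n | wlen p = M}.Finite :=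
  .of_injOn (f := rword) (t := {l : List (Letter n) | l.length = M}) (fun _ h => h)
    FreeGroup.toWord_injective.injOn (List.finite_length_eq _ M)

/-- The sphere of radius `M` around `1` in the Cayley tree. -/
def sphere (n M : ℕ) : Finset (F n) := (finite_wlen_eq n M).toFinset

/-- The shadow of `Q` seen from `p`: the vertices of the sphere of radius `M` around `1` whose
geodesic from `p` passes through `Q`. -/
def shadow (M : ℕ) (p Q : F n) : Finset (F n) := {q ∈ sphere n M | Q ∈ seg p q}

lemma mem_sphere {M : ℕ} {p : F n} : p ∈ sphere n M ↔ wlen p = M :=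
  (finite_wlen_eq n M).mem_toFinset

lemma mem_shadow {M : ℕ} {p Q q : F n} : q ∈ shadow M p Q ↔ wlen q = M ∧ Q ∈ seg p q := by
  rw [shadow, Finset.mem_filter, mem_sphere]

lemma shadow_eq_singleton {p Q : F n} (hne : p ≠ Q) (hp : wlen p ≤ wlen Q) :
    shadow (wlen Q) p Q = {Q} := by
  ext q
  rw [mem_shadow, Finset.mem_singleton]
  refine ⟨fun ⟨hq, hseg⟩ => ?_, ?_⟩
  · by_contra hqQ
    rw [mem_seg_iff_dir_ne_of_ne hne.symm] at hseg
    exact hseg ((dir_eq_dir_one hne.symm hp).trans (dir_eq_dir_one (Ne.symm hqQ) hq.le).symm)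
  · rintro rfl
    exact ⟨rfl, right_mem_seg _ _⟩

lemma mul_letterE_mem_seg_iff {p Q q : F n} {b : Letter n} (h : dir Q p ≠ some b) :
    Q * letterE b ∈ seg p q ↔ dir Q q = some b := by
  have hb := dist'_mul_letterE Q b
  have htri := dist'_triangle p Q (Q * letterE b)
  constructor
  · intro hseg
    by_contra hq
    have hp : Q ∈ seg p (Q * letterE b) := mem_seg_of_dir_ne (by rwa [dir_mul_letterE])
    have hq : Q ∈ seg (Q * letterE b) q :=
      mem_seg_of_dir_ne (by rwa [dir_mul_letterE, ne_comm])
    have htri := dist'_triangle p Q q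
    rw [seg, Set.mem_ofPred_eq] at hseg hp hq
    rw [dist'_comm] at hb
    lia
  · intro hq
    have hQ : Q ∈ seg p q := mem_seg_of_dir_ne (by rwa [hq])
    have hlen := dist'_mul_letterE_of_dir hq
    have htri' := dist'_triangle p (Q * letterE b) q
    rw [seg, Set.mem_ofPred_eq] at hQ ⊢
    lia

lemma sum_shadow_eq_sum_letter {E : Type*} [AddCommMonoid E] (f : F n → E) {M : ℕ} {p Q : F n}
    (hne : p ≠ Q) (hQ : wlen Q < M) :
    ∑ q ∈ shadow M p Q, f q =
      ∑ b, if dir Q p ≠ some b then ∑ q ∈ shadow M p (Q * letterE b), f q else 0 := by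
  have hterm : ∀ b, (if dir Q p ≠ some b then ∑ q ∈ shadow M p (Q * letterE b), f q else 0) =
      ∑ q ∈ sphere n M, if dir Q q = some b then if dir Q p ≠ dir Q q then f q else 0 else 0 := by
    intro b
    split_ifs with h
    · rw [shadow, Finset.sum_filter]
      refine Finset.sum_congr rfl fun q _ => ?_
      rw [mul_letterE_mem_seg_iff h]
      split_ifs with hq hq'
      exacts [rfl, absurd (hq ▸ h) hq', rfl]
    · refine (Finset.sum_eq_zero fun q _ => ?_).symm
      split_ifs with hq hq'
      exacts [absurd (hq ▸ hq') h, rfl, rfl]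
  rw [Finset.sum_congr rfl fun b _ => hterm b, Finset.sum_comm, shadow, Finset.sum_filter]
  refine Finset.sum_congr rfl fun q hq => ?_
  have hqQ : Q ≠ q := by
    rintro rfl
    exact hQ.ne (mem_sphere.1 hq)
  obtain ⟨c, hc⟩ := exists_dir hqQ
  simp only [mem_seg_iff_dir_ne_of_ne hne.symm, hc, Option.some_inj, Finset.sum_ite_eq,
    Finset.mem_univ, if_true]

/-- The Kirchhoff law on `F_n − 𝒜`: the value at a word is the sum of the values at its length-one
extensions. -/
def IsAdditive (A : Fin r → Subgroup (F n)) (L : ℕ) (η : F n → NNReal) : Prop :=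
  ∀ w ∈ FmA A L, η w = ∑ b : Letter n,
    if wlen (w * letterE b) = wlen w + 1 then η (w * letterE b) else 0

lemma IsAdditive.eq_sum_letter {η : F n → NNReal} (hη : IsAdditive A L η) {p Q : F n}
    (h : p⁻¹ * Q ∈ FmA A L) :
    η (p⁻¹ * Q) = ∑ b, if dir Q p ≠ some b then η (p⁻¹ * (Q * letterE b)) else 0 := by
  have hne : p⁻¹ * Q ≠ 1 := fun h1 => ne_of_mem_FmA h (inv_mul_eq_one.1 h1)
  have hdir : ∀ b, wlen (p⁻¹ * Q * letterE b) = wlen (p⁻¹ * Q) + 1 ↔ dir Q p ≠ some b := by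
    intro b
    rw [← wlen_letterE b, wlen_mul_eq_add_iff hne, firstLetter_letterE, mul_inv_rev, inv_inv, dir]
  simp only [hη _ h, hdir, ← mul_assoc]

lemma IsAdditive.sum_shadow {η : F n → NNReal} (hη : IsAdditive A L η) {M : ℕ} {p Q : F n}
    (hp : wlen p ≤ M) (hQ : wlen Q ≤ M) (h : p⁻¹ * Q ∈ FmA A L) :
    ∑ q ∈ shadow M p Q, η (p⁻¹ * q) = η (p⁻¹ * Q) := by
  obtain ⟨k, hk⟩ : ∃ k, 2 * M ≤ dist' p Q + k := ⟨2 * M, Nat.le_add_left _ _⟩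
  induction k generalizing Q with
  | zero =>
    have htri := dist'_triangle p 1 Q
    rw [dist'_comm p 1, dist'_one_left, dist'_one_left] at htri
    obtain rfl : wlen Q = M := by lia
    rw [shadow_eq_singleton (ne_of_mem_FmA h) hp, Finset.sum_singleton]
  | succ k ih =>
    rcases hQ.eq_or_lt with rfl | hlt
    · rw [shadow_eq_singleton (ne_of_mem_FmA h) hp, Finset.sum_singleton]
    · rw [sum_shadow_eq_sum_letter _ (ne_of_mem_FmA h) hlt, hη.eq_sum_letter h]
      refine Finset.sum_congr rfl fun b _ => if_ctx_congr Iff.rfl (fun hb => ?_) fun _ => rfl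
      have hseg : Q ∈ seg p (Q * letterE b) := mem_seg_of_dir_ne (by rwa [dir_mul_letterE])
      have hlen := wlen_mul_le Q (letterE b)
      rw [wlen_letterE] at hlen
      refine ih (hlen.trans hlt) (FmA_of_mem_seg (left_mem_seg _ _) hseg h) ?_
      rw [seg, Set.mem_ofPred_eq, dist'_mul_letterE] at hseg
      lia

lemma IsAdditive.sum_sum_sphere {η : F n → NNReal} (hη : IsAdditive A L η)
    (hinv : ∀ w ∈ FmA A L, η w⁻¹ = η w) {M : ℕ} {P Q : F n} (hP : wlen P ≤ M) (hQ : wlen Q ≤ M)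
    (h : P⁻¹ * Q ∈ FmA A L) :
    ∑ p ∈ sphere n M, ∑ q ∈ sphere n M,
      (if P ∈ seg p Q ∧ Q ∈ seg p q then η (p⁻¹ * q) else 0) = η (P⁻¹ * Q) := by
  have hflip : ∀ x y : F n, x⁻¹ * y ∈ FmA A L → η (y⁻¹ * x) = η (x⁻¹ * y) := fun x y hxy => by
    rw [← hinv _ hxy, mul_inv_rev, inv_inv]
  rw [← hflip P Q h, ← hη.sum_shadow hQ hP (FmA_symm h), shadow, Finset.sum_filter]
  refine Finset.sum_congr rfl fun p hp => ?_
  rw [seg_symm Q p]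
  split_ifs with hseg
  · have hpQ : p⁻¹ * Q ∈ FmA A L := FmA_of_mem_seg hseg (right_mem_seg _ _) h
    rw [hflip p Q hpQ, ← hη.sum_shadow (mem_sphere.1 hp).le hQ hpQ, shadow, Finset.sum_filter]
    simp only [hseg, true_and]
  · exact Finset.sum_eq_zero fun q _ => if_neg fun h' => hseg h'.1

lemma mem_seg_and_mem_seg_iff {p q P Q : F n} : P ∈ seg p q ∧ Q ∈ seg p q ↔
    (P ∈ seg p Q ∧ Q ∈ seg p q) ∨ (Q ∈ seg p P ∧ P ∈ seg p q) := by
  constructor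
  · rintro ⟨hP, hQ⟩
    rcases le_total (dist' p P) (dist' p Q) with hle | hle
    exacts [.inl ⟨mem_seg_of_dist'_le hP hQ hle, hQ⟩, .inr ⟨mem_seg_of_dist'_le hQ hP hle, hP⟩]
  · rintro (⟨hP, hQ⟩ | ⟨hQ, hP⟩)
    exacts [⟨seg_subset_seg_of_mem (left_mem_seg _ _) hQ hP, hQ⟩,
      ⟨hP, seg_subset_seg_of_mem (left_mem_seg _ _) hP hQ⟩]

lemma IsAdditive.sum_sum_sphere_mem_seg {η : F n → NNReal} (hη : IsAdditive A L η)
    (hinv : ∀ w ∈ FmA A L, η w⁻¹ = η w) {M : ℕ} {P Q : F n} (hP : wlen P ≤ M) (hQ : wlen Q ≤ M)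
    (h : P⁻¹ * Q ∈ FmA A L) :
    ∑ p ∈ sphere n M, ∑ q ∈ sphere n M,
      (if P ∈ seg p q ∧ Q ∈ seg p q then η (p⁻¹ * q) else 0) = 2 * η (P⁻¹ * Q) := by
  have hexcl : ∀ p, P ∈ seg p Q → Q ∉ seg p P := fun p hp hp' => by
    have hpos : dist' P Q ≠ 0 := mt dist'_eq_zero.1 (ne_of_mem_FmA h)
    rw [seg, Set.mem_ofPred_eq] at hp hp'
    lia
  have hswap : η (Q⁻¹ * P) = η (P⁻¹ * Q) := by rw [← hinv _ h, mul_inv_rev, inv_inv]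
  calc
    _ = (∑ p ∈ sphere n M, ∑ q ∈ sphere n M,
          if P ∈ seg p Q ∧ Q ∈ seg p q then η (p⁻¹ * q) else 0) +
        ∑ p ∈ sphere n M, ∑ q ∈ sphere n M,
          if Q ∈ seg p P ∧ P ∈ seg p q then η (p⁻¹ * q) else 0 := by
      simp only [← Finset.sum_add_distrib]
      refine Finset.sum_congr rfl fun p _ => Finset.sum_congr rfl fun q _ => ?_
      rw [if_congr mem_seg_and_mem_seg_iff rfl rfl]
      split_ifs with h₁ h₂ h₃ <;> grind
    _ = 2 * η (P⁻¹ * Q) := by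
      rw [hη.sum_sum_sphere hinv hP hQ h, hη.sum_sum_sphere hinv hQ hP (FmA_symm h), hswap, two_mul]

end Sphere

/-! ### Existence -/

section Existence

variable {n r L : ℕ} {A : Fin r → Subgroup (F n)}

/- The reduced word of `p` is prolonged by repeating its last letter forever. -/
lemma exists_ray_eq {p : F n} (hp : p ≠ 1) : ∃ ξ : Boundary n, ray ξ (wlen p) = p := by
  have hpos : 0 < (rword p).length := Nat.pos_of_ne_zero (mt wlen_eq_zero.1 hp)
  have hlt : ∀ i, min i ((rword p).length - 1) < (rword p).length := by lia
  have hred : IsRed fun i => (rword p)[min i ((rword p).length - 1)]'(hlt i) := by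
    intro i
    by_cases h : i + 1 < (rword p).length
    · have hchain := List.isChain_iff_getElem.1 (isReduced_rword p) i h
      rw [fst_imp_snd_iff_ne_linv] at hchain
      simpa only [min_eq_left (Nat.le_sub_one_of_lt h),
        min_eq_left (Nat.le_sub_one_of_lt (i.lt_succ_self.trans h))] using hchain
    · simp only [min_eq_right (a := i + 1) (b := (rword p).length - 1) (by lia),
        min_eq_right (a := i) (b := (rword p).length - 1) (by lia)]
      exact (linv_ne _).symm
  refine ⟨⟨_, hred⟩, wordPrefixOf_iff.1 (List.ext_getElem ?_ fun i hi hi' => ?_)⟩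
  · simp only [bpre, List.length_map, List.length_range, wlen]
  · simp only [bpre, List.getElem_map, List.getElem_range, min_eq_left (Nat.le_sub_one_of_lt hi')]

lemma nonempty_box {p q : F n} (hne : p ≠ q) (hpq : wlen p = wlen q) : (box p q).Nonempty := by
  obtain ⟨ξ, hξ⟩ := exists_ray_eq (p := p) <| by
    rintro rfl
    exact hne (wlen_eq_zero.1 (hpq.symm.trans wlen_one)).symm
  obtain ⟨ζ, hζ⟩ := exists_ray_eq (p := q) <| by
    rintro rfl
    exact hne (wlen_eq_zero.1 (hpq.trans wlen_one))
  refine ⟨s(ξ, ζ), (mem_box_iff_trace hne hpq).2 ?_⟩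
  rw [trace, Sym2.map_mk, hξ, hpq, hζ]

lemma mem_box_iff_mem_seg {p q P Q : F n} (hne : p ≠ q) (hpq : wlen p = wlen q) (hPQ : P ≠ Q)
    (hP : wlen P ≤ wlen p) (hQ : wlen Q ≤ wlen p) {z : Sym2 (Boundary n)} (hz : z ∈ box p q) :
    z ∈ box P Q ↔ P ∈ seg p q ∧ Q ∈ seg p q := by
  induction z with
  | _ ξ ζ =>
    rw [mem_box_iff_trace hne hpq, trace, Sym2.map_mk] at hz
    rw [mk_mem_box_of_ne hPQ hP hQ]
    rcases Sym2.eq_iff.1 hz with ⟨hξ, hζ⟩ | ⟨hξ, hζ⟩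
    · rw [hξ, hζ]
    · rw [hξ, hζ, seg_symm]

lemma exists_measure_relBox_eq_ite (A : Fin r → Subgroup (F n)) (L : ℕ) {p q : F n}
    (hpq : wlen p = wlen q) :
    ∃ ν : Measure ↥(relSet A), ∀ P Q, wlen P ≤ wlen p → wlen Q ≤ wlen p → P⁻¹ * Q ∈ FmA A L →
      ν (relBox A P Q) = if P ∈ seg p q ∧ Q ∈ seg p q then 1 else 0 := by
  by_cases hgood : p⁻¹ * q ∈ FmA A L
  · have hne := ne_of_mem_FmA hgood
    obtain ⟨z, hz⟩ := nonempty_box hne hpq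
    refine ⟨.dirac ⟨z, box_subset_relSet hgood hz⟩, fun P Q hP hQ h => ?_⟩
    rw [Measure.dirac_apply' _ (isOpen_relBox h).measurableSet, Set.indicator_apply, Pi.one_apply]
    exact if_congr (mem_box_iff_mem_seg hne hpq (ne_of_mem_FmA h) hP hQ hz) rfl rfl
  · exact ⟨0, fun P Q _ _ h => (if_neg fun hseg => hgood (FmA_of_mem_seg hseg.1 hseg.2 h)).symm⟩

lemma IsAdditive.exists_measure_relBox_eq_of_le {η : F n → NNReal} (hη : IsAdditive A L η)
    (hinv : ∀ w ∈ FmA A L, η w⁻¹ = η w) (M : ℕ) :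
    ∃ μ : Measure ↥(relSet A), ∀ P Q, wlen P ≤ M → wlen Q ≤ M → P⁻¹ * Q ∈ FmA A L →
      μ (relBox A P Q) = η (P⁻¹ * Q) := by
  have hν : ∀ p q : F n, ∃ ν : Measure ↥(relSet A), wlen p = M → wlen q = M →
      ∀ P Q, wlen P ≤ M → wlen Q ≤ M → P⁻¹ * Q ∈ FmA A L →
        ν (relBox A P Q) = if P ∈ seg p q ∧ Q ∈ seg p q then 1 else 0 := fun p q => by
    by_cases hpq : wlen p = wlen q
    · obtain ⟨ν, hν⟩ := exists_measure_relBox_eq_ite A L hpq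
      exact ⟨ν, by rintro rfl -; exact hν⟩
    · exact ⟨0, fun hp hq => absurd (hp.trans hq.symm) hpq⟩
  choose ν hν using hν
  refine ⟨(2⁻¹ : NNReal) • ∑ p ∈ sphere n M, ∑ q ∈ sphere n M, η (p⁻¹ * q) • ν p q,
    fun P Q hP hQ h => ?_⟩
  have hmass : ∑ p ∈ sphere n M, ∑ q ∈ sphere n M, η (p⁻¹ * q) • ν p q (relBox A P Q) =
      ((2 * η (P⁻¹ * Q) : NNReal) : ENNReal) := by
    rw [← hη.sum_sum_sphere_mem_seg hinv hP hQ h, ENNReal.ofNNReal_finsetSum]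
    refine Finset.sum_congr rfl fun p hp => ?_
    rw [ENNReal.ofNNReal_finsetSum]
    refine Finset.sum_congr rfl fun q hq => ?_
    rw [hν p q (mem_sphere.1 hp) (mem_sphere.1 hq) P Q hP hQ h]
    split_ifs
    · rw [ENNReal.smul_def, smul_eq_mul, mul_one]
    · rw [smul_zero, ENNReal.coe_zero]
  simp only [Measure.smul_apply, Measure.finsetSum_apply, hmass]
  rw [ENNReal.smul_def, smul_eq_mul, ← ENNReal.coe_mul, inv_mul_cancel_left₀ two_ne_zero]

lemma IsAdditive.exists_regular_measure_relBox_eq {η : F n → NNReal} (hη : IsAdditive A L η)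
    (hdiam : DiamBound A L) (hinv : ∀ w ∈ FmA A L, η w⁻¹ = η w) :
    ∃ μ : Measure ↥(relSet A), μ.Regular ∧ ∀ P Q, P⁻¹ * Q ∈ FmA A L →
      μ (relBox A P Q) = η (P⁻¹ * Q) := by
  have : Countable (F n) := FreeGroup.toWord_injective.countable
  choose μ hμ using hη.exists_measure_relBox_eq_of_le hinv
  let U : {p : F n × F n // p.1⁻¹ * p.2 ∈ FmA A L} → Set ↥(relSet A) :=
    fun p => relBox A p.1.1 p.1.2
  have hbasis : TopologicalSpace.IsTopologicalBasis (Set.range U) :=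
    (isTopologicalBasis_boxes hdiam).of_isOpen_of_subset
      (Set.forall_mem_range.2 fun p => isOpen_relBox p.2) <| by
        rintro _ ⟨P, Q, -, h, rfl⟩
        exact ⟨⟨(P, Q), h⟩, rfl⟩
  obtain ⟨ν, hreg, hν⟩ := exists_regular_measure_eq hbasis (fun p => isCompact_relBox p.2) (μ := μ)
    (c := fun p => (η (p.1.1⁻¹ * p.1.2) : ENNReal))
    (fun p => Filter.eventually_atTop.2 ⟨max (wlen p.1.1) (wlen p.1.2), fun M hM =>
      hμ M _ _ ((le_max_left _ _).trans hM) ((le_max_right _ _).trans hM) p.2⟩)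
    fun _ => ENNReal.coe_ne_top
  exact ⟨ν, hreg, fun P Q h => hν ⟨(P, Q), h⟩⟩

lemma map_relAct_eq_self (hdiam : DiamBound A L) {η : F n → NNReal} {μ : Measure ↥(relSet A)}
    (hμ : ∀ P Q, P⁻¹ * Q ∈ FmA A L → μ (relBox A P Q) = η (P⁻¹ * Q)) (g : F n) :
    μ.map (relAct A g) = μ := by
  refine (measure_ext_boxes hdiam ?_ ?_).symm <;> rintro _ ⟨P, Q, -, h, rfl⟩
  · rw [hμ P Q h]
    exact ENNReal.coe_ne_top
  · have htrans : (g⁻¹ * P)⁻¹ * (g⁻¹ * Q) = P⁻¹ * Q := by group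
    rw [Measure.map_apply (measurable_relAct hdiam g) (isOpen_relBox h).measurableSet,
      relAct_preimage_relBox hdiam, hμ P Q h, hμ _ _ (htrans ▸ h), htrans]

end Existence

theorem statement_9_general (n r L : ℕ) (A : Fin r → Subgroup (F n)) (hdiam : DiamBound A L)
    (η : F n → NNReal) (hinv : ∀ w ∈ FmA A L, η w⁻¹ = η w)
    (hadd : ∀ w ∈ FmA A L,
      η w = ∑ b : Letter n,
        if wlen (w * letterE b) = wlen w + 1 then η (w * letterE b) else 0) :
    ∃! μ : Measure ↥(relSet A),
      IsRelCurrent A μ ∧ ∀ w ∈ FmA A L, μ (relCyl A w) = (η w : ENNReal) := by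
  have hη : IsAdditive A L η := hadd
  obtain ⟨μ, hreg, hμ⟩ := hη.exists_regular_measure_relBox_eq hdiam hinv
  have hinvariant : ∀ g s, MeasurableSet s → μ (relAct A g ⁻¹' s) = μ s := fun g s hs => by
    rw [← Measure.map_apply (measurable_relAct hdiam g) hs, map_relAct_eq_self hdiam hμ]
  refine ⟨μ, ⟨⟨hinvariant, hreg⟩, fun w hw => ?_⟩, ?_⟩
  · rw [← one_mul w, ← inv_one] at hw ⊢
    rw [← measure_relBox hdiam hinvariant hw, hμ 1 w hw]
  · rintro ν ⟨⟨hν, -⟩, hνη⟩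
    refine measure_ext_boxes hdiam ?_ ?_ <;> rintro _ ⟨P, Q, -, h, rfl⟩ <;>
      rw [measure_relBox hdiam hν h, hνη _ h]
    exacts [ENNReal.coe_ne_top, (hμ P Q h).symm]

/-- Kolmogorov-type extension: an inversion-invariant additive function on F_n − 𝒜
extends uniquely to a relative current. -/
theorem statement_9 (n r L : ℕ) (hn : 2 ≤ n) (A : Fin r → Subgroup (F n))
    (hsys : IsSystem A) (hmal : SystemMalnormal A) (hL : 1 ≤ L)
    (hdiam : DiamBound A L) (hbase : ∀ i, (1 : F n) ∈ treeVerts (A i))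
    (η : F n → NNReal)
    (hinv : ∀ w ∈ FmA A L, η w⁻¹ = η w)
    (hadd : ∀ w ∈ FmA A L,
      η w = ∑ b : Letter n,
        if wlen (w * letterE b) = wlen w + 1 then η (w * letterE b) else 0) :
    ∃! μ : Measure ↥(relSet A),
      IsRelCurrent A μ ∧ ∀ w ∈ FmA A L, μ (relCyl A w) = (η w : ENNReal) :=
  statement_9_general n r L A hdiam η hinv hadd

end RelCurr
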